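/- arXiv:1109.2409 — 3 statements merged into one kernel-verified Lean document; each statement's English description precedes it below -/
import Mathlib

section
/- For a partition $\mu$ of $n$, let $H_\mu \subseteq S_{2n}$ denote the set of permutations with coset-type $\mu$. Then $|H_\mu| = (2^n n!)^2 / (2^{\ell(\mu)} z_\mu)$, where $\ell(\mu)$ is the length of $\mu$ and $z_\mu = \prod_{r \ge 1} r^{m_r(\mu)} m_r(\mu)!$ with $m_r(\mu)$ the number of parts of $\mu$ equal to $r$. -/
open scoped Classical

noncomputable section

/-- The vertex `2k-1` (0-indexed: `2k`). -/
def lo (n : ℕ) (k : Fin n) : Fin (2*n) := ⟨2*k.1, by have := k.2; omega⟩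
/-- The vertex `2k` (0-indexed: `2k+1`). -/
def hi (n : ℕ) (k : Fin n) : Fin (2*n) := ⟨2*k.1+1, by have := k.2; omega⟩

/-- The hyperoctahedral group `H_n ⊆ S_{2n}`, generated by the transpositions
`(2k-1, 2k)` and the double transpositions `(2i-1, 2j-1)(2i, 2j)` for `i < j`. -/
def hyperoctahedral (n : ℕ) : Subgroup (Equiv.Perm (Fin (2*n))) :=
  Subgroup.closure
    ({g | ∃ k : Fin n, g = Equiv.swap (lo n k) (hi n k)} ∪
     {g | ∃ i j : Fin n, i < j ∧
        g = Equiv.swap (lo n i) (lo n j) * Equiv.swap (hi n i) (hi n j)})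

/-- The graph `Γ(σ)` on vertices `1, …, 2n` with edges `{2k-1, 2k}` and
`{σ(2k-1), σ(2k)}` for `k = 1, …, n`. -/
def pairGraph (n : ℕ) (σ : Equiv.Perm (Fin (2*n))) : SimpleGraph (Fin (2*n)) :=
  SimpleGraph.fromRel (fun x y => ∃ k : Fin n,
    (x = lo n k ∧ y = hi n k) ∨ (x = σ (lo n k) ∧ y = σ (hi n k)))

/-- `ℓ′(σ)`, the number of connected components of `Γ(σ)`. -/
def compCount (n : ℕ) (σ : Equiv.Perm (Fin (2*n))) : ℕ :=
  Nat.card (pairGraph n σ).ConnectedComponent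

/-- The coset-type of `σ ∈ S_{2n}`: the multiset of half the sizes of the
connected components of `Γ(σ)`; it is a partition of `n`. -/
def cosetType (n : ℕ) (σ : Equiv.Perm (Fin (2*n))) : Multiset ℕ :=
  haveI : Fintype (pairGraph n σ).ConnectedComponent := Fintype.ofFinite _
  (Finset.univ : Finset (pairGraph n σ).ConnectedComponent).val.map
    (fun c => c.supp.ncard / 2)

/-- `z_μ = ∏_r r^{m_r(μ)} m_r(μ)!`. -/
def zmu (μ : Multiset ℕ) : ℕ :=
  μ.toFinset.prod fun r => r ^ μ.count r * (μ.count r).factorial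

namespace CosetCount

/-- The labelling of `Fin (2n)` by pairs. -/
def pairE (n : ℕ) : Fin n × Bool ≃ Fin (2*n) where
  toFun p := bif p.2 then hi n p.1 else lo n p.1
  invFun v := (⟨v.1 / 2, by have := v.2; omega⟩, decide (v.1 % 2 = 1))
  left_inv := by
    rintro ⟨k, b⟩
    cases b
    · ext <;> simp [lo]
    · ext
      · simp [hi]; try omega
      · simp [hi]; try omega
  right_inv := by
    intro v
    by_cases h : v.1 % 2 = 1
    · ext; simp [hi, h]; omega
    · ext; simp [lo, h]; omega

/-- Flip the second coordinate according to `f`. -/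
def flipE {n : ℕ} (f : Fin n → Bool) : Equiv.Perm (Fin n × Bool) where
  toFun p := (p.1, xor p.2 (f p.1))
  invFun p := (p.1, xor p.2 (f p.1))
  left_inv p := by simp
  right_inv p := by simp

/-- A labelling twisted by `f`. -/
def twE {n : ℕ} (f : Fin n → Bool) : Fin n × Bool ≃ Fin (2*n) := (flipE f).trans (pairE n)

/-- Act by `α` on colour `false` and by `β` on colour `true`. -/
def prodE {n : ℕ} (α β : Equiv.Perm (Fin n)) : Equiv.Perm (Fin n × Bool) where
  toFun p := (bif p.2 then β p.1 else α p.1, p.2)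
  invFun p := (bif p.2 then β.symm p.1 else α.symm p.1, p.2)
  left_inv p := by rcases p with ⟨k, _ | _⟩ <;> simp
  right_inv p := by rcases p with ⟨k, _ | _⟩ <;> simp

/-- The permutation built from the data. -/
def Phi {n : ℕ} (f g : Fin n → Bool) (α β : Equiv.Perm (Fin n)) : Equiv.Perm (Fin (2*n)) :=
  (twE g).symm.trans ((prodE α β).trans (twE f))

/-- The colouring built from `f`. -/
def col {n : ℕ} (f : Fin n → Bool) (v : Fin (2*n)) : Bool := ((twE f).symm v).2

/-- Proper two-colourings. -/
def Proper {n : ℕ} (σ : Equiv.Perm (Fin (2*n))) (c : Fin (2*n) → Bool) : Prop :=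
  (∀ k, c (lo n k) ≠ c (hi n k)) ∧ (∀ k, c (σ (lo n k)) ≠ c (σ (hi n k)))

theorem lo_eq {n : ℕ} (f : Fin n → Bool) (k : Fin n) : lo n k = twE f (k, f k) := by
  simp [twE, flipE, pairE]

theorem hi_eq {n : ℕ} (f : Fin n → Bool) (k : Fin n) : hi n k = twE f (k, !f k) := by
  simp [twE, flipE, pairE]

@[simp] theorem col_tw {n : ℕ} (f : Fin n → Bool) (p) : col f (twE f p) = p.2 := by
  simp [col]

theorem col_lo {n : ℕ} (f : Fin n → Bool) (k : Fin n) : col f (lo n k) = f k := by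
  rw [lo_eq f, col_tw]

theorem col_hi {n : ℕ} (f : Fin n → Bool) (k : Fin n) : col f (hi n k) = !f k := by
  rw [hi_eq f, col_tw]

theorem Phi_tw {n : ℕ} (f g : Fin n → Bool) (α β : Equiv.Perm (Fin n)) (p) :
    Phi f g α β (twE g p) = twE f (bif p.2 then β p.1 else α p.1, p.2) := by
  simp [Phi, prodE]

theorem col_Phi {n : ℕ} (f g : Fin n → Bool) (α β : Equiv.Perm (Fin n)) (v) :
    col f (Phi f g α β v) = col g v := by
  obtain ⟨p, rfl⟩ := (twE g).surjective v
  rw [Phi_tw, col_tw, col_tw]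

theorem proper_Phi {n : ℕ} (f g : Fin n → Bool) (α β : Equiv.Perm (Fin n)) :
    Proper (Phi f g α β) (col f) := by
  constructor
  · intro k; rw [col_lo, col_hi]; cases f k <;> simp
  · intro k; rw [col_Phi, col_Phi, col_lo, col_hi]; cases g k <;> simp

theorem eq_col {n : ℕ} (c : Fin (2*n) → Bool) (h : ∀ k, c (lo n k) ≠ c (hi n k)) :
    c = col (fun k => c (lo n k)) := by
  funext v
  obtain ⟨⟨k, b⟩, rfl⟩ := (pairE n).surjective v
  cases b
  · have : pairE n (k, false) = lo n k := rfl
    rw [this, col_lo]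
  · have : pairE n (k, true) = hi n k := rfl
    rw [this, col_hi]
    have := h k
    revert this
    cases c (lo n k) <;> cases c (hi n k) <;> simp

/-- The main parametrisation. -/
def param (n : ℕ) (d : ((Fin n → Bool) × (Fin n → Bool)) × (Equiv.Perm (Fin n) × Equiv.Perm (Fin n))) :
    {p : Equiv.Perm (Fin (2*n)) × (Fin (2*n) → Bool) // Proper p.1 p.2} :=
  ⟨(Phi d.1.1 d.1.2 d.2.1 d.2.2, col d.1.1), proper_Phi _ _ _ _⟩

theorem col_inj {n : ℕ} {f g : Fin n → Bool} (h : col f = col g) : f = g := by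
  funext k
  have := congrFun h (lo n k)
  rwa [col_lo, col_lo] at this

theorem param_bij (n : ℕ) : Function.Bijective (param n) := by
  constructor
  · rintro ⟨⟨f, g⟩, α, β⟩ ⟨⟨f', g'⟩, α', β'⟩ h
    have h1 : Phi f g α β = Phi f' g' α' β' := congrArg (fun x => x.1.1) h
    have h2 : col f = col f' := congrArg (fun x => x.1.2) h
    obtain rfl := col_inj h2
    have h3 : col g = col g' := by
      funext v
      rw [← col_Phi f g α β, h1, col_Phi]
    obtain rfl := col_inj h3
    have h4 : ∀ p : Fin n × Bool, (bif p.2 then β p.1 else α p.1) = (bif p.2 then β' p.1 else α' p.1) := by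
      intro p
      have := congrFun (congrArg DFunLike.coe h1) (twE g p)
      rw [Phi_tw, Phi_tw] at this
      exact congrArg Prod.fst ((twE f).injective this)
    have ha : α = α' := by ext k; exact congrArg Fin.val (h4 (k, false))
    have hb : β = β' := by ext k; exact congrArg Fin.val (h4 (k, true))
    rw [ha, hb]
  · rintro ⟨⟨σ, c⟩, hc1, hc2⟩
    simp only at hc1 hc2
    have e1 := eq_col c hc1
    have e2 := eq_col (fun v => c (σ v)) hc2
    set f := fun k => c (lo n k)
    set g := fun k => c (σ (lo n k))
    have key : ∀ p, ((twE f).symm (σ (twE g p))).2 = p.2 := by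
      intro p
      have : c (σ (twE g p)) = p.2 := by rw [congrFun e2 (twE g p), col_tw]
      rw [e1] at this
      exact this
    have inj : ∀ b, Function.Injective (fun k => ((twE f).symm (σ (twE g (k, b)))).1) := by
      intro b k l h
      have : (twE f).symm (σ (twE g (k, b))) = (twE f).symm (σ (twE g (l, b))) :=
        Prod.ext h (by rw [key, key])
      simpa using this
    refine ⟨((f, g), (Equiv.ofBijective _ (Finite.injective_iff_bijective.1 (inj false)),
      Equiv.ofBijective _ (Finite.injective_iff_bijective.1 (inj true)))), ?_⟩
    apply Subtype.ext
    apply Prod.ext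
    · apply Equiv.ext
      intro v
      obtain ⟨⟨k, b⟩, rfl⟩ := (twE g).surjective v
      simp only [param]
      rw [Phi_tw]
      rw [← Equiv.eq_symm_apply]
      apply Prod.ext
      · cases b <;> simp
      · rw [key]
    · exact e1.symm

/-- The pair index of a vertex. -/
def lab {n : ℕ} (v : Fin (2*n)) : Fin n := ((pairE n).symm v).1

@[simp] theorem lab_tw {n : ℕ} (f : Fin n → Bool) (p) : lab (twE f p) = p.1 := by
  simp [lab, twE, flipE]

end CosetCount

namespace CosetCount

theorem zmu_identity (m : Multiset ℕ) (k : ℕ) (hm : ∀ a ∈ m, 2 ≤ a) :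
    zmu (m + Multiset.replicate k 1) =
      k.factorial * m.prod * (∏ n ∈ m.toFinset, (m.count n).factorial) := by
  have h1 : 1 ∉ m := fun h => by have := hm 1 h; omega
  have hc : ∀ r ∈ m.toFinset, (m + Multiset.replicate k 1).count r = m.count r := by
    intro r hr
    have : r ≠ 1 := by rintro rfl; exact h1 (by simpa using hr)
    simp [Multiset.count_replicate, this.symm]
  have e : zmu (m + Multiset.replicate k 1) = ∏ r ∈ insert 1 m.toFinset,
      r ^ (m + Multiset.replicate k 1).count r *
        ((m + Multiset.replicate k 1).count r).factorial := by
    unfold zmu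
    apply Finset.prod_subset
    · intro r hr
      simp only [Multiset.mem_toFinset, Multiset.mem_add, Finset.mem_insert] at hr ⊢
      rcases hr with hr | hr
      · exact Or.inr hr
      · exact Or.inl (Multiset.eq_of_mem_replicate hr)
    · intro r _ hr
      rw [Multiset.mem_toFinset] at hr
      rw [Multiset.count_eq_zero_of_notMem hr]; simp
  rw [e, Finset.prod_insert (by simpa using h1)]
  have : ∏ r ∈ m.toFinset, r ^ (m + Multiset.replicate k 1).count r *
        ((m + Multiset.replicate k 1).count r).factorial
      = ∏ r ∈ m.toFinset, r ^ m.count r * (m.count r).factorial :=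
    Finset.prod_congr rfl (fun r hr => by rw [hc r hr])
  rw [this, Finset.prod_mul_distrib, ← Finset.prod_multiset_count]
  simp [Multiset.count_eq_zero_of_notMem h1, mul_assoc]

theorem card_perm_type (n : ℕ) (μ : Nat.Partition n) :
    Nat.card {w : Equiv.Perm (Fin n) // w.partition.parts = μ.parts} * zmu μ.parts
      = n.factorial := by
  set m := μ.parts.filter (fun a => 2 ≤ a) with hm
  have hm2 : ∀ a ∈ m, 2 ≤ a := fun a ha => (Multiset.mem_filter.1 ha).2
  have hsplit : μ.parts = m + Multiset.replicate (n - m.sum) 1 := by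
    have h := Multiset.filter_add_not (fun a => 2 ≤ a) μ.parts
    have h1 : μ.parts.filter (fun a => ¬ 2 ≤ a) =
        Multiset.replicate (Multiset.card (μ.parts.filter (fun a => ¬ 2 ≤ a))) 1 := by
      rw [Multiset.eq_replicate_card]
      intro b hb
      rw [Multiset.mem_filter] at hb
      have := μ.parts_pos hb.1
      omega
    have h2 := congrArg Multiset.sum h
    rw [Multiset.sum_add, μ.parts_sum, h1, Multiset.sum_replicate, smul_eq_mul, mul_one] at h2
    have h3 : n - m.sum = Multiset.card (μ.parts.filter (fun a => ¬ 2 ≤ a)) := by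
      rw [hm]; omega
    rw [h3, ← h1, hm, h]
  have hle : m.sum ≤ n := by
    have := congrArg Multiset.sum (Multiset.filter_add_not (fun a => 2 ≤ a) μ.parts)
    rw [Multiset.sum_add, μ.parts_sum] at this
    rw [hm]
    omega
  have hiff : ∀ w : Equiv.Perm (Fin n), w.partition.parts = μ.parts ↔ w.cycleType = m := by
    intro w
    constructor
    · intro h
      rw [← Equiv.Perm.filter_parts_partition_eq_cycleType, h, hm]
    · intro h
      rw [Equiv.Perm.parts_partition, hsplit, h, ← Equiv.Perm.sum_cycleType, h, Fintype.card_fin]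
  have hcard := Equiv.Perm.card_of_cycleType_mul_eq (Fin n) m
  rw [if_pos ⟨by simpa using hle, hm2⟩, Fintype.card_fin] at hcard
  rw [hsplit, zmu_identity m _ hm2, ← hsplit, ← hcard]
  congr 1
  rw [Nat.card_eq_fintype_card, Fintype.card_subtype]
  congr 1
  ext w
  simp [hiff]

theorem orbit_parts {α C : Type*} [Fintype α] [DecidableEq α] [Fintype C] (w : Equiv.Perm α) (j : α → C)
    (hj : Function.Surjective j) (hs : ∀ k l, j k = j l ↔ w.SameCycle k l) :
    (Finset.univ : Finset C).val.map (fun c => (Finset.univ.filter (fun k => j k = c)).card)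
      = w.partition.parts := by
  let s := Function.surjInv hj
  have hsj : ∀ c, j (s c) = c := Function.surjInv_eq hj
  rw [← Multiset.filter_add_not (fun c => w (s c) ≠ s c) (Finset.univ : Finset C).val,
    Multiset.map_add, Equiv.Perm.parts_partition]
  congr 1
  · rw [Equiv.Perm.cycleType_def]
    apply Multiset.map_eq_map_of_bij_of_nodup _ _ (Finset.univ.nodup.filter _)
      w.cycleFactorsFinset.nodup (fun c _ => w.cycleOf (s c))
    · intro c hc
      rw [Multiset.mem_filter] at hc
      exact Equiv.Perm.cycleOf_mem_cycleFactorsFinset_iff.2 (Equiv.Perm.mem_support.2 hc.2)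
    · intro a ha b hb h
      rw [Multiset.mem_filter] at ha hb
      have := (Equiv.Perm.sameCycle_iff_cycleOf_eq_of_mem_support
        (Equiv.Perm.mem_support.2 ha.2) (Equiv.Perm.mem_support.2 hb.2)).2 h
      rw [← hs, hsj, hsj] at this
      exact this
    · intro γ hγ
      have hγ' : γ ∈ w.cycleFactorsFinset := hγ
      obtain ⟨x, hx⟩ := (Equiv.Perm.mem_cycleFactorsFinset_iff.1 hγ').1.nonempty_support
      have hxw := Equiv.Perm.mem_cycleFactorsFinset_support_le hγ' hx
      have hsc : w.SameCycle (s (j x)) x := by rw [← hs, hsj]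
      refine ⟨j x, ?_, ?_⟩
      · rw [Multiset.mem_filter]
        exact ⟨Finset.mem_univ _, Equiv.Perm.mem_support.1 (hsc.mem_support_iff.2 hxw)⟩
      · rw [hsc.cycleOf_eq, Equiv.Perm.cycle_is_cycleOf hx hγ']
    · intro c hc
      rw [Multiset.mem_filter] at hc
      simp only [Function.comp]
      congr 1
      ext k
      rw [Equiv.Perm.mem_support_cycleOf_iff' hc.2, ← hs, hsj]
      simp [eq_comm]
  · rw [Multiset.eq_replicate]
    constructor
    · rw [Multiset.card_map]
      have : Fintype.card α - w.support.card = (w.supportᶜ).card := by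
        rw [Finset.card_compl]
      rw [this]
      change (Finset.univ.filter (fun c => ¬ (w (s c) ≠ s c))).card = _
      apply Finset.card_bij (fun c _ => s c)
      · intro c hc; simpa using hc
      · intro a _ b _ h; rw [← hsj a, h, hsj]
      · intro x hx
        have hx' : w x = x := by simpa using hx
        have : w.SameCycle x (s (j x)) := by rw [← hs, hsj]
        have h2 : s (j x) = x := (this.eq_of_left hx').symm
        exact ⟨j x, by simp [h2, hx'], h2⟩
    · intro b hb
      obtain ⟨c, hc, rfl⟩ := Multiset.mem_map.1 hb
      rw [Multiset.mem_filter] at hc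
      have hf : w (s c) = s c := not_not.1 hc.2
      rw [Finset.card_eq_one]
      refine ⟨s c, ?_⟩
      ext k
      simp only [Finset.mem_filter, Finset.mem_univ, true_and, Finset.mem_singleton]
      constructor
      · intro h
        have : w.SameCycle (s c) k := by rw [← hs, hsj, h]
        exact (this.eq_of_left hf).symm
      · rintro rfl; exact hsj c

end CosetCount

namespace CosetCount

theorem exists_colouring {V : Type*} (τ τ' : Equiv.Perm V) (h1 : ∀ x, τ (τ x) = x)
    (h1' : ∀ x, τ' (τ' x) = x) (h2 : ∀ x, τ x ≠ x) (h2' : ∀ x, τ' x ≠ x) :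
    ∃ c : V → Bool, ∀ x, c (τ x) ≠ c x ∧ c (τ' x) ≠ c x := by
  have hconj : SemiconjBy τ (τ * τ') (τ * τ')⁻¹ := by
    have e1 : τ⁻¹ = τ := by ext x; rw [Equiv.Perm.inv_eq_iff_eq, h1]
    have e2 : τ'⁻¹ = τ' := by ext x; rw [Equiv.Perm.inv_eq_iff_eq, h1']
    unfold SemiconjBy
    rw [mul_inv_rev, e1, e2]
    ext x
    simp [h1]
  have hcomm : ∀ (k : ℤ) x, τ (((τ * τ') ^ k) x) = ((τ * τ') ^ (-k)) (τ x) := by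
    intro k x
    have := (hconj.zpow_right k).eq
    rw [inv_zpow, ← zpow_neg] at this
    exact congrFun (congrArg DFunLike.coe this) x
  have hne : ∀ x, ¬ (τ * τ').SameCycle x (τ x) := by
    rintro x ⟨k, hk⟩
    rcases Int.even_or_odd' k with ⟨j, rfl | rfl⟩
    · apply h2 (((τ * τ') ^ j) x)
      rw [hcomm, ← hk, ← Equiv.Perm.mul_apply, ← zpow_add]
      congr 2; ring
    · apply h2' (((τ * τ') ^ j) x)
      apply τ.injective
      rw [hcomm, ← hk]
      have a1 : τ (τ' (((τ * τ') ^ j) x)) = ((τ * τ') ^ (1 + j)) x := by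
        rw [zpow_one_add]; rfl
      have a2 : ((τ * τ') ^ (-j)) (((τ * τ') ^ (2 * j + 1)) x) = ((τ * τ') ^ (1 + j)) x := by
        rw [← Equiv.Perm.mul_apply, ← zpow_add]
        congr 2; ring
      rw [a1, a2]
  let q : V → Quotient (Equiv.Perm.SameCycle.setoid (τ * τ')) := fun x => Quotient.mk _ x
  have hq : ∀ x y, q x = q y ↔ (τ * τ').SameCycle x y := fun x y => Quotient.eq
  have q1 : ∀ x, q (τ' x) = q (τ x) := by
    intro x
    rw [hq]
    exact ⟨1, by simp [h1']⟩
  have q2 : ∀ x, q (τ (τ' x)) = q x := by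
    intro x
    rw [hq]
    exact ⟨-1, by
      rw [zpow_neg_one, Equiv.Perm.inv_eq_iff_eq]; rfl⟩
  have q3 : ∀ x, q x ≠ q (τ x) := fun x h => hne x ((hq _ _).1 h)
  have hR : ∀ a b : Quotient (Equiv.Perm.SameCycle.setoid (τ * τ')), a ≠ b →
      decide (WellOrderingRel b a) ≠ decide (WellOrderingRel a b) := by
    intro a b hab h
    rw [decide_eq_decide] at h
    rcases trichotomous_of WellOrderingRel a b with h' | h' | h'
    · exact asymm_of WellOrderingRel h' (h.2 h')
    · exact hab h'
    · exact asymm_of WellOrderingRel h' (h.1 h')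
  refine ⟨fun x => decide (WellOrderingRel (q x) (q (τ x))), fun x => ⟨?_, ?_⟩⟩
  · simp only [h1]
    exact hR _ _ (q3 x)
  · simp only [q1, q2]
    exact hR _ _ (q3 x)

theorem exists_proper {n : ℕ} (σ : Equiv.Perm (Fin (2*n))) : ∃ c, Proper σ c := by
  let τ : Equiv.Perm (Fin (2*n)) := (pairE n).symm.trans ((flipE fun _ => true).trans (pairE n))
  have t1 : ∀ x, τ (τ x) = x := by
    intro x
    obtain ⟨p, rfl⟩ := (pairE n).surjective x
    simp [τ, flipE]
  have t2 : ∀ x, τ x ≠ x := by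
    intro x
    obtain ⟨⟨k, b⟩, rfl⟩ := (pairE n).surjective x
    simp [τ, flipE]
  have t3 : ∀ k, τ (lo n k) = hi n k := by
    intro k
    change τ (pairE n (k, false)) = pairE n (k, true)
    simp [τ, flipE]
  obtain ⟨c, hc⟩ := exists_colouring τ (σ * τ * σ⁻¹) t1 (by intro x; simp [t1]) t2 (by
    intro x h
    apply t2 (σ⁻¹ x)
    rw [Equiv.Perm.eq_inv_iff_eq]
    exact h)
  refine ⟨c, fun k => ?_, fun k => ?_⟩
  · have := (hc (lo n k)).1
    rw [t3] at this
    exact this.symm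
  · have := (hc (σ (lo n k))).2
    simp [t3] at this
    exact fun h => this h.symm

theorem reach_lift {V : Type*} {G : SimpleGraph V} {R : V → V → Prop} (hR : Equivalence R)
    (h : ∀ u v, G.Adj u v → R u v) {u v : V} (huv : G.Reachable u v) : R u v := by
  obtain ⟨p⟩ := huv
  induction p with
  | nil => exact hR.refl _
  | cons hadj _ ih => exact hR.trans (h _ _ hadj) ih

theorem adj_rel {n : ℕ} {σ : Equiv.Perm (Fin (2*n))} {R : Fin (2*n) → Fin (2*n) → Prop}
    (hR : Equivalence R) (h1 : ∀ k, R (lo n k) (hi n k)) (h2 : ∀ k, R (σ (lo n k)) (σ (hi n k)))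
    (u v) (h : (pairGraph n σ).Adj u v) : R u v := by
  rw [pairGraph, SimpleGraph.fromRel_adj] at h
  obtain ⟨-, ⟨k, ⟨rfl, rfl⟩ | ⟨rfl, rfl⟩⟩ | ⟨k, ⟨rfl, rfl⟩ | ⟨rfl, rfl⟩⟩⟩ := h
  · exact h1 k
  · exact h2 k
  · exact hR.symm (h1 k)
  · exact hR.symm (h2 k)

theorem lo_ne_hi {n : ℕ} (k : Fin n) : lo n k ≠ hi n k := by
  intro h
  have := congrArg Fin.val h
  simp [lo, hi] at this

theorem adj1 {n : ℕ} (σ : Equiv.Perm (Fin (2*n))) (k : Fin n) :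
    (pairGraph n σ).Adj (lo n k) (hi n k) := by
  rw [pairGraph, SimpleGraph.fromRel_adj]
  exact ⟨lo_ne_hi k, Or.inl ⟨k, Or.inl ⟨rfl, rfl⟩⟩⟩

theorem adj2 {n : ℕ} (σ : Equiv.Perm (Fin (2*n))) (k : Fin n) :
    (pairGraph n σ).Adj (σ (lo n k)) (σ (hi n k)) := by
  rw [pairGraph, SimpleGraph.fromRel_adj]
  exact ⟨fun h => lo_ne_hi k (σ.injective h), Or.inl ⟨k, Or.inr ⟨rfl, rfl⟩⟩⟩

theorem card_proper {n : ℕ} (σ : Equiv.Perm (Fin (2*n))) :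
    Nat.card {c // Proper σ c} = 2 ^ compCount n σ := by
  obtain ⟨c0, h0⟩ := exists_proper σ
  have hx : ∀ a b c : Bool, a ≠ b → xor a c ≠ xor b c := by decide
  have hx2 : ∀ a b c d : Bool, a ≠ b → c ≠ d → xor a c = xor b d := by decide
  let F : ((pairGraph n σ).ConnectedComponent → Bool) → {c // Proper σ c} := fun h =>
    ⟨fun v => xor (c0 v) (h ((pairGraph n σ).connectedComponentMk v)), by
      constructor
      · intro k
        simp only
        rw [SimpleGraph.ConnectedComponent.sound (adj1 σ k).reachable]
        exact hx _ _ _ (h0.1 k)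
      · intro k
        simp only
        rw [SimpleGraph.ConnectedComponent.sound (adj2 σ k).reachable]
        exact hx _ _ _ (h0.2 k)⟩
  have hF : Function.Bijective F := by
    constructor
    · intro a b hab
      funext C
      induction C using SimpleGraph.ConnectedComponent.ind with
      | h v =>
        have := congrFun (congrArg Subtype.val hab) v
        simpa [F] using this
    · rintro ⟨c, hc⟩
      have hcon : ∀ u v, (pairGraph n σ).Reachable u v → xor (c u) (c0 u) = xor (c v) (c0 v) := by
        intro u v huv
        have hE : Equivalence (fun u v => xor (c u) (c0 u) = xor (c v) (c0 v)) :=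
          ⟨fun _ => rfl, fun h => h.symm, fun h h' => h.trans h'⟩
        exact reach_lift hE (adj_rel hE (fun k => hx2 _ _ _ _ (hc.1 k) (h0.1 k))
          (fun k => hx2 _ _ _ _ (hc.2 k) (h0.2 k))) huv
      refine ⟨fun C => xor (c C.out) (c0 C.out), ?_⟩
      apply Subtype.ext
      funext v
      have hr : (pairGraph n σ).Reachable ((pairGraph n σ).connectedComponentMk v).out v :=
        SimpleGraph.ConnectedComponent.exact (Quot.out_eq _)
      simp only [F]
      rw [hcon _ _ hr]
      cases c v <;> cases c0 v <;> rfl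
  rw [← Nat.card_eq_of_bijective F hF, Nat.card_fun]
  simp [compCount]

theorem card_cosetType {n : ℕ} (σ : Equiv.Perm (Fin (2*n))) :
    Multiset.card (cosetType n σ) = compCount n σ := by
  letI : Fintype (pairGraph n σ).ConnectedComponent := Fintype.ofFinite _
  rw [compCount, Nat.card_eq_fintype_card, cosetType, Multiset.card_map]
  rfl

theorem reach_iff {n : ℕ} (f g : Fin n → Bool) (α β : Equiv.Perm (Fin n)) (u v) :
    (pairGraph n (Phi f g α β)).Reachable u v ↔ (α * β⁻¹).SameCycle (lab u) (lab v) := by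
  have hab : ∀ k, (α * β⁻¹).SameCycle (β k) (α k) := fun k => ⟨1, by simp⟩
  constructor
  · intro h
    have hE : Equivalence (fun u v : Fin (2*n) => (α * β⁻¹).SameCycle (lab u) (lab v)) :=
      ⟨fun _ => Equiv.Perm.SameCycle.refl _ _, fun h => h.symm, fun h h' => h.trans h'⟩
    refine reach_lift hE (adj_rel hE (fun k => ?_) (fun k => ?_)) h
    · rw [lo_eq f, hi_eq f, lab_tw, lab_tw]
    · rw [lo_eq g, hi_eq g, Phi_tw, Phi_tw, lab_tw, lab_tw]
      cases g k
      · exact (hab k).symm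
      · exact hab k
  · have r1 : ∀ k b b', (pairGraph n (Phi f g α β)).Reachable (twE f (k, b)) (twE f (k, b')) := by
      intro k b b'
      have h := (adj1 (Phi f g α β) k).reachable
      rw [lo_eq f, hi_eq f] at h
      have h' := h.symm
      revert h h'
      cases f k <;> cases b <;> cases b' <;> simp +contextual
    have r2 : ∀ k b b', (pairGraph n (Phi f g α β)).Reachable (twE f (β k, b))
        (twE f (α k, b')) := by
      intro k b b'
      refine (r1 _ b true).trans (SimpleGraph.Reachable.trans ?_ (r1 _ false b'))
      have h := (adj2 (Phi f g α β) k).reachable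
      rw [lo_eq g, hi_eq g, Phi_tw, Phi_tw] at h
      have h' := h.symm
      revert h h'
      cases g k <;> simp +contextual
    obtain ⟨⟨k, b⟩, rfl⟩ := (twE f).surjective u
    obtain ⟨⟨l, b'⟩, rfl⟩ := (twE f).surjective v
    rw [lab_tw, lab_tw]
    intro h
    obtain ⟨i, hi⟩ := h.exists_nat_pow_eq
    simp only at hi
    clear h
    induction i generalizing l b' with
    | zero =>
      obtain rfl : k = l := hi
      exact r1 _ _ _
    | succ i ih =>
      refine (ih _ false rfl).trans ?_
      have := r2 (β⁻¹ (((α * β⁻¹) ^ i) k)) false b'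
      rw [pow_succ', Equiv.Perm.mul_apply, Equiv.Perm.mul_apply] at hi
      rwa [← Equiv.Perm.mul_apply, mul_inv_cancel, Equiv.Perm.one_apply, hi] at this

theorem cosetType_Phi {n : ℕ} (f g : Fin n → Bool) (α β : Equiv.Perm (Fin n)) :
    cosetType n (Phi f g α β) = (α * β⁻¹).partition.parts := by
  let G := pairGraph n (Phi f g α β)
  letI : Fintype G.ConnectedComponent := Fintype.ofFinite _
  let j : Fin n → G.ConnectedComponent := fun k => G.connectedComponentMk (twE f (k, false))
  have hjl : ∀ v, j (lab v) = G.connectedComponentMk v := by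
    intro v
    apply SimpleGraph.ConnectedComponent.sound
    rw [reach_iff, lab_tw]
  rw [← orbit_parts (α * β⁻¹) j]
  · unfold cosetType
    apply Multiset.map_congr rfl
    intro c _
    have : c.supp = ((((Finset.univ.filter (fun k => j k = c)) ×ˢ (Finset.univ : Finset Bool)).map
        (twE f).toEmbedding : Finset (Fin (2*n))) : Set (Fin (2*n))) := by
      ext v
      obtain ⟨⟨k, b⟩, rfl⟩ := (twE f).surjective v
      have h := hjl (twE f (k, b))
      rw [lab_tw] at h
      rw [SimpleGraph.ConnectedComponent.mem_supp_iff]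
      change G.connectedComponentMk _ = c ↔ _
      rw [← h]
      simp
    rw [this, Set.ncard_coe_finset, Finset.card_map, Finset.card_product]
    simp
  · intro c
    induction c using SimpleGraph.ConnectedComponent.ind with
    | h v => exact ⟨lab v, hjl v⟩
  · intro k l
    rw [SimpleGraph.ConnectedComponent.eq, reach_iff, lab_tw, lab_tw]

theorem main_count (n : ℕ) (μ : Nat.Partition n) :
    Nat.card {σ : Equiv.Perm (Fin (2*n)) // cosetType n σ = μ.parts} *
      (2 ^ Multiset.card μ.parts * zmu μ.parts) = (2^n * n.factorial)^2 := by
  have e1 : Nat.card {p : {p : Equiv.Perm (Fin (2*n)) × (Fin (2*n) → Bool) // Proper p.1 p.2} //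
      cosetType n p.1.1 = μ.parts} =
      Nat.card {σ : Equiv.Perm (Fin (2*n)) // cosetType n σ = μ.parts} *
        2 ^ Multiset.card μ.parts := by
    let e : {p : {p : Equiv.Perm (Fin (2*n)) × (Fin (2*n) → Bool) // Proper p.1 p.2} //
      cosetType n p.1.1 = μ.parts} ≃
      (Σ σ : {σ : Equiv.Perm (Fin (2*n)) // cosetType n σ = μ.parts}, {c // Proper σ.1 c}) :=
      { toFun := fun p => ⟨⟨p.1.1.1, p.2⟩, ⟨p.1.1.2, p.1.2⟩⟩
        invFun := fun s => ⟨⟨(s.1.1, s.2.1), s.2.2⟩, s.1.2⟩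
        left_inv := fun _ => rfl
        right_inv := fun _ => rfl }
    rw [Nat.card_congr e, Nat.card_sigma]
    rw [Finset.sum_congr rfl (fun σ _ => show _ = 2 ^ Multiset.card μ.parts by
      rw [card_proper, ← card_cosetType, σ.2])]
    simp [Nat.card_eq_fintype_card]
  have e2 : Nat.card {p : {p : Equiv.Perm (Fin (2*n)) × (Fin (2*n) → Bool) // Proper p.1 p.2} //
      cosetType n p.1.1 = μ.parts} =
      (2^n * 2^n) * (Nat.card {w : Equiv.Perm (Fin n) // w.partition.parts = μ.parts}
        * n.factorial) := by
    let e : {p : {p : Equiv.Perm (Fin (2*n)) × (Fin (2*n) → Bool) // Proper p.1 p.2} //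
      cosetType n p.1.1 = μ.parts} ≃
      {d : ((Fin n → Bool) × (Fin n → Bool)) × (Equiv.Perm (Fin n) × Equiv.Perm (Fin n)) //
        (d.2.1 * d.2.2⁻¹).partition.parts = μ.parts} :=
      ((Equiv.ofBijective _ (param_bij n)).subtypeEquiv (fun d => by
        rw [← cosetType_Phi d.1.1 d.1.2]; rfl)).symm
    let e' : {d : ((Fin n → Bool) × (Fin n → Bool)) × (Equiv.Perm (Fin n) × Equiv.Perm (Fin n)) //
        (d.2.1 * d.2.2⁻¹).partition.parts = μ.parts} ≃
        ((Fin n → Bool) × (Fin n → Bool)) ×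
          ({w : Equiv.Perm (Fin n) // w.partition.parts = μ.parts} × Equiv.Perm (Fin n)) :=
      { toFun := fun d => (d.1.1, (⟨d.1.2.1 * d.1.2.2⁻¹, d.2⟩, d.1.2.2))
        invFun := fun x => ⟨(x.1, (x.2.1.1 * x.2.2, x.2.2)), by simpa using x.2.1.2⟩
        left_inv := fun d => by simp
        right_inv := fun d => by simp }
    rw [Nat.card_congr (e.trans e')]
    simp [Nat.card_prod, Nat.card_fun, Fintype.card_perm]
  have e3 := card_perm_type n μ
  rw [← mul_assoc, ← e1, e2]
  calc _ = (2^n * 2^n) * n.factorial * (Nat.card {w : Equiv.Perm (Fin n) // w.partition.parts = μ.parts} * zmu μ.parts) := by ring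
    _ = _ := by rw [e3]; ring

end CosetCount

/-- `|H_μ| = (2^n n!)^2 / (2^{ℓ(μ)} z_μ)`. -/
theorem stmt1 (n : ℕ) (μ : Nat.Partition n) :
    Nat.card {σ : Equiv.Perm (Fin (2*n)) // cosetType n σ = μ.parts} =
      (2^n * n.factorial)^2 / (2 ^ Multiset.card μ.parts * zmu μ.parts) := by 
  rw [← CosetCount.main_count n μ]
  refine (Nat.mul_div_cancel _ ?_).symm
  by_contra h
  have h0 : 2 ^ Multiset.card μ.parts * zmu μ.parts = 0 := by omega
  have := CosetCount.main_count n μ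
  rw [h0, mul_zero] at this
  have hp : 0 < (2^n * n.factorial)^2 := by positivity
  omega
end
end

section
/- Let $V = (v_{ij})$ be an $N \times N$ COE matrix, $N \ge 2$, and $i \ne j$. Then $\mathbb{E}[v_{ij}^2\, \overline{v_{ii} v_{jj}}] = \frac{-4}{(N+1)N(N+3)}$. -/
open MeasureTheory Matrix

noncomputable section

/-- Borel measurable structure on the unitary group. -/
instance (N : ℕ) : MeasurableSpace (Matrix.unitaryGroup (Fin N) ℂ) := borel _

instance (N : ℕ) : BorelSpace (Matrix.unitaryGroup (Fin N) ℂ) := ⟨rfl⟩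

/-- The entry `v_{ij} = (Uᵀ U)_{ij}` of the COE matrix `V = Uᵀ U` built from a
unitary matrix `U`. -/
def coeEntry {N : ℕ} (U : Matrix.unitaryGroup (Fin N) ℂ) (i j : Fin N) : ℂ :=
  (((U : Matrix (Fin N) (Fin N) ℂ))ᵀ * (U : Matrix (Fin N) (Fin N) ℂ)) i j

section COEproof

variable {N : ℕ}

instance coeCompact : CompactSpace (Matrix.unitaryGroup (Fin N) ℂ) := by
  refine isCompact_iff_compactSpace.1 (?_ : IsCompact
    ((Matrix.unitaryGroup (Fin N) ℂ : Submonoid _) : Set (Matrix (Fin N) (Fin N) ℂ)))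
  have hK : IsCompact (Set.univ.pi fun _ : Fin N => Set.univ.pi fun _ : Fin N =>
      Metric.closedBall (0 : ℂ) 1) :=
    isCompact_univ_pi fun _ => isCompact_univ_pi fun _ => isCompact_closedBall _ _
  refine IsCompact.of_isClosed_subset (X := Matrix (Fin N) (Fin N) ℂ) hK ?_ ?_
  · have : ((Matrix.unitaryGroup (Fin N) ℂ : Submonoid _) : Set (Matrix (Fin N) (Fin N) ℂ)) =
        {A | A * star A = 1} := by
      ext A; exact Matrix.mem_unitaryGroup_iff
    rw [this]
    exact isClosed_eq (by fun_prop) continuous_const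
  · intro A hA
    intro i _ j _
    refine mem_closedBall_zero_iff.2 ?_
    exact entry_norm_bound_of_unitary hA i j

lemma coe_right_inv (μ : Measure (Matrix.unitaryGroup (Fin N) ℂ))
    [μ.IsHaarMeasure] [IsProbabilityMeasure μ] : μ.IsMulRightInvariant := by
  refine ⟨fun g => ?_⟩
  have : IsProbabilityMeasure (Measure.map (· * g) μ) :=
    Measure.isProbabilityMeasure_map (by fun_prop)
  exact Measure.isHaarMeasure_eq_of_isProbabilityMeasure _ _

/-- The COE matrix. -/
def VM (U : Matrix.unitaryGroup (Fin N) ℂ) : Matrix (Fin N) (Fin N) ℂ :=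
  ((U : Matrix (Fin N) (Fin N) ℂ))ᵀ * (U : Matrix (Fin N) (Fin N) ℂ)

lemma VM_cont : Continuous (VM (N := N)) := by
  unfold VM; fun_prop

lemma VM_symm (U : Matrix.unitaryGroup (Fin N) ℂ) (a b : Fin N) : VM U a b = VM U b a := by
  have : (VM U)ᵀ = VM U := by simp [VM]
  conv_lhs => rw [← this]
  rfl

lemma VM_unit (U : Matrix.unitaryGroup (Fin N) ℂ) : VM U * (VM U)ᴴ = 1 := by
  have h1 : (U : Matrix (Fin N) (Fin N) ℂ) * (U : Matrix (Fin N) (Fin N) ℂ)ᴴ = 1 :=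
    Matrix.mem_unitaryGroup_iff.1 U.2
  have h2 : (U : Matrix (Fin N) (Fin N) ℂ)ᴴ * (U : Matrix (Fin N) (Fin N) ℂ) = 1 :=
    Matrix.mem_unitaryGroup_iff'.1 U.2
  have h3 := congrArg Matrix.transpose h2
  rw [Matrix.transpose_mul, Matrix.transpose_one] at h3
  unfold VM
  rw [Matrix.conjTranspose_mul]
  calc _ = (U : Matrix (Fin N) (Fin N) ℂ)ᵀ * ((U : Matrix (Fin N) (Fin N) ℂ) *
        (U : Matrix (Fin N) (Fin N) ℂ)ᴴ) * ((U : Matrix (Fin N) (Fin N) ℂ)ᵀ)ᴴ := by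
          simp only [Matrix.mul_assoc]
    _ = _ := by rw [h1, Matrix.mul_one]; exact h3

lemma VM_row (U : Matrix.unitaryGroup (Fin N) ℂ) (a b : Fin N) :
    ∑ k, VM U a k * star (VM U b k) = if a = b then 1 else 0 := by
  have := congrFun (congrFun (VM_unit U) a) b
  simpa [Matrix.mul_apply, Matrix.one_apply] using this

lemma VM_mul (U W : Matrix.unitaryGroup (Fin N) ℂ) :
    VM (U * W) = (W : Matrix (Fin N) (Fin N) ℂ)ᵀ * VM U * (W : Matrix (Fin N) (Fin N) ℂ) := by
  simp [VM, Matrix.mul_assoc]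

lemma VM_inv (μ : Measure (Matrix.unitaryGroup (Fin N) ℂ))
    [μ.IsHaarMeasure] [IsProbabilityMeasure μ] (F : Matrix (Fin N) (Fin N) ℂ → ℂ)
    (W : Matrix.unitaryGroup (Fin N) ℂ) :
    ∫ U, F ((W : Matrix (Fin N) (Fin N) ℂ)ᵀ * VM U * (W : Matrix (Fin N) (Fin N) ℂ)) ∂μ
      = ∫ U, F (VM U) ∂μ := by
  have := coe_right_inv μ
  have h := integral_mul_right_eq_self (μ := μ) (fun U => F (VM U)) W
  simpa only [VM_mul] using h

lemma cont_int (μ : Measure (Matrix.unitaryGroup (Fin N) ℂ)) [IsProbabilityMeasure μ]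
    {f : Matrix.unitaryGroup (Fin N) ℂ → ℂ} (hf : Continuous f) : Integrable f μ :=
  hf.integrable_of_hasCompactSupport (HasCompactSupport.of_compactSpace f)

/-- differentiation of a constant integral -/
lemma coe_deriv_zero (μ : Measure (Matrix.unitaryGroup (Fin N) ℂ)) [IsProbabilityMeasure μ]
    (f f' : ℝ → Matrix.unitaryGroup (Fin N) ℂ → ℂ)
    (hf : ∀ t, Continuous (f t)) (hf' : Continuous fun p : ℝ × _ => f' p.1 p.2)
    (hd : ∀ t U, HasDerivAt (fun s => f s U) (f' t U) t) (C : ℂ)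
    (hc : ∀ t, ∫ U, f t U ∂μ = C) : ∫ U, f' 0 U ∂μ = 0 := by
  obtain ⟨B, hB⟩ := ((isCompact_Icc (a := (-1:ℝ)) (b := 1)).prod
    (isCompact_univ (X := Matrix.unitaryGroup (Fin N) ℂ))).exists_bound_of_continuousOn
      hf'.continuousOn
  have h := hasDerivAt_integral_of_dominated_loc_of_deriv_le (μ := μ) (F := f) (F' := f')
    (x₀ := (0:ℝ)) (s := Set.Icc (-1) 1) (bound := fun _ => B)
    (Icc_mem_nhds (by norm_num) (by norm_num))
    (Filter.Eventually.of_forall fun t => (cont_int μ (hf t)).aestronglyMeasurable)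
    (cont_int μ (hf 0))
    (cont_int μ (f := f' 0) (hf'.comp (by fun_prop : Continuous fun U => ((0:ℝ), U)))).aestronglyMeasurable
    (Filter.Eventually.of_forall fun U t ht => hB (t, U) ⟨ht, trivial⟩)
    (integrable_const _)
    (Filter.Eventually.of_forall fun U t _ => hd t U)
  have h2 := h.2
  simp only [hc] at h2
  exact h2.unique (hasDerivAt_const _ _)

/-- rotation in the plane `p, q`. -/
def rot (p q : Fin N) (t : ℝ) : Matrix (Fin N) (Fin N) ℂ := fun a b =>
  if a = p then (if b = p then (Real.cos t : ℂ) else if b = q then -(Real.sin t : ℂ) else 0)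
  else if a = q then (if b = p then (Real.sin t : ℂ) else if b = q then (Real.cos t : ℂ) else 0)
  else if a = b then 1 else 0

def rot' (p q : Fin N) (t : ℝ) : Matrix (Fin N) (Fin N) ℂ := fun a b =>
  if a = p then (if b = p then (-Real.sin t : ℂ) else if b = q then -(Real.cos t : ℂ) else 0)
  else if a = q then (if b = p then (Real.cos t : ℂ) else if b = q then (-Real.sin t : ℂ) else 0)
  else 0

lemma conj_cos_real (t : ℝ) : (starRingEnd ℂ) (Complex.cos t) = Complex.cos t := by
  rw [← Complex.cos_conj, Complex.conj_ofReal]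

lemma conj_sin_real (t : ℝ) : (starRingEnd ℂ) (Complex.sin t) = Complex.sin t := by
  rw [← Complex.sin_conj, Complex.conj_ofReal]

lemma rot_unit (p q : Fin N) (hpq : p ≠ q) (t : ℝ) : rot p q t ∈ Matrix.unitaryGroup (Fin N) ℂ := by
  rw [Matrix.mem_unitaryGroup_iff]
  have hs : ((Real.sin t : ℝ) : ℂ) * (Real.sin t : ℝ) + (Real.cos t : ℝ) * (Real.cos t : ℝ) = 1 := by
    have := Real.sin_sq_add_cos_sq t
    rw [sq, sq] at this
    exact_mod_cast this
  have hc : ∀ c : Fin N, ∀ f : Fin N → ℂ, (∑ x, if x = c then f x else 0) = f c := by simp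
  have key : ∀ (f : Fin N → ℂ), (∀ x, x ≠ p → x ≠ q → f x = 0) → ∑ x, f x = f p + f q := by
    intro f hf
    rw [← Finset.sum_pair hpq]
    symm
    apply Finset.sum_subset (Finset.subset_univ _)
    intro x _ hx
    simp at hx
    exact hf x hx.1 hx.2
  ext a b
  rw [Matrix.mul_apply]
  simp only [Matrix.star_apply, Matrix.one_apply]
  by_cases h1 : a = p ∨ a = q
  · rw [key]
    · rcases h1 with h1 | h1 <;> by_cases hb : b = p <;> by_cases hb' : b = q <;>
        simp_all [rot, eq_comm] <;> grind [conj_cos_real, conj_sin_real]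
    · intro x hx hx'
      rcases h1 with h1 | h1 <;> simp [rot, hx, hx', h1]
  · push Not at h1
    have : ∀ x, rot p q t a x = if x = a then 1 else 0 := by
      intro x; simp [rot, h1, eq_comm]
    simp only [this, ite_mul, zero_mul, one_mul, hc]
    grind [rot, star_one, star_zero]

lemma rot_deriv (p q : Fin N) (t : ℝ) (a b : Fin N) :
    HasDerivAt (fun s => rot p q s a b) (rot' p q t a b) t := by
  have hs : HasDerivAt (fun s : ℝ => ((Real.sin s : ℝ) : ℂ)) ((Real.cos t : ℝ) : ℂ) t :=
    (Real.hasDerivAt_sin t).ofReal_comp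
  have hc : HasDerivAt (fun s : ℝ => ((Real.cos s : ℝ) : ℂ)) (-(Real.sin t : ℝ) : ℂ) t := by
    simpa using (Real.hasDerivAt_cos t).ofReal_comp
  unfold rot rot'
  split_ifs <;> first | exact hs | exact hc | exact hs.neg | exact hasDerivAt_const _ _

lemma rot_cont (p q : Fin N) : Continuous (rot p q) := by
  refine continuous_matrix fun a b => ?_
  unfold rot
  split_ifs <;> fun_prop

lemma rot'_cont (p q : Fin N) : Continuous (rot' p q) := by
  refine continuous_matrix fun a b => ?_
  unfold rot'
  split_ifs <;> fun_prop

def vt (p q : Fin N) (t : ℝ) (U : Matrix.unitaryGroup (Fin N) ℂ) : Matrix (Fin N) (Fin N) ℂ :=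
  (rot p q t)ᵀ * VM U * rot p q t

def vt' (p q : Fin N) (t : ℝ) (U : Matrix.unitaryGroup (Fin N) ℂ) : Matrix (Fin N) (Fin N) ℂ :=
  (rot' p q t)ᵀ * VM U * rot p q t + (rot p q t)ᵀ * VM U * rot' p q t

lemma vt_cont (p q : Fin N) (a b : Fin N) :
    Continuous fun x : ℝ × Matrix.unitaryGroup (Fin N) ℂ => vt p q x.1 x.2 a b := by
  have h1 := rot_cont p q
  have h3 := VM_cont (N := N)
  have : Continuous fun x : ℝ × Matrix.unitaryGroup (Fin N) ℂ => vt p q x.1 x.2 := by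
    unfold vt; fun_prop
  exact this.matrix_elem a b

lemma vt'_cont (p q : Fin N) (a b : Fin N) :
    Continuous fun x : ℝ × Matrix.unitaryGroup (Fin N) ℂ => vt' p q x.1 x.2 a b := by
  have h1 := rot_cont p q
  have h2 := rot'_cont p q
  have h3 := VM_cont (N := N)
  have : Continuous fun x : ℝ × Matrix.unitaryGroup (Fin N) ℂ => vt' p q x.1 x.2 := by
    unfold vt'; fun_prop
  exact this.matrix_elem a b

lemma vt_deriv (p q : Fin N) (t : ℝ) (U : Matrix.unitaryGroup (Fin N) ℂ) (a b : Fin N) :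
    HasDerivAt (fun s => vt p q s U a b) (vt' p q t U a b) t := by
  simp only [vt, vt', Matrix.add_apply, Matrix.mul_apply, Matrix.transpose_apply,
    ← Finset.sum_add_distrib]
  refine HasDerivAt.fun_sum fun c _ => ?_
  have h := (HasDerivAt.fun_sum (u := Finset.univ)
    fun d _ => (rot_deriv p q t d a).mul_const (VM U d c)).mul (rot_deriv p q t c b)
  exact h

lemma rot_zero (p q : Fin N) : rot p q 0 = 1 := by
  ext a b
  simp only [rot, Matrix.one_apply]
  grind [Real.cos_zero, Real.sin_zero, Complex.ofReal_one, Complex.ofReal_zero]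

/-- Lie derivative of entries -/
def dl (p q : Fin N) (V : Matrix (Fin N) (Fin N) ℂ) (a b : Fin N) : ℂ :=
  (if a = p then V q b else if a = q then - V p b else 0) +
  (if b = p then V a q else if b = q then - V a p else 0)

lemma vt_zero (p q : Fin N) (U : Matrix.unitaryGroup (Fin N) ℂ) : vt p q 0 U = VM U := by
  simp [vt, rot_zero]

lemma vt'_zero (p q : Fin N) (hpq : p ≠ q) (U : Matrix.unitaryGroup (Fin N) ℂ) (a b : Fin N) :
    vt' p q 0 U a b = dl p q (VM U) a b := by
  have hr : ∀ x y, rot' p q 0 x y =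
      (if y = p then (if x = q then 1 else 0) else if y = q then (if x = p then -1 else 0) else 0) := by
    intro x y
    simp only [rot', Real.sin_zero, Real.cos_zero]
    grind [Complex.ofReal_one, Complex.ofReal_zero]
  simp only [vt', rot_zero, Matrix.transpose_one, Matrix.one_mul, Matrix.mul_one,
    Matrix.add_apply, Matrix.mul_apply, Matrix.transpose_apply, hr, dl]
  congr 1
  · split_ifs <;> simp
  · split_ifs <;> simp

@[fun_prop]
lemma VM_entry_cont (a b : Fin N) :
    Continuous fun U : Matrix.unitaryGroup (Fin N) ℂ => VM U a b :=
  VM_cont.matrix_elem a b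

section moments

variable (μ : Measure (Matrix.unitaryGroup (Fin N) ℂ))
    [μ.IsHaarMeasure] [IsProbabilityMeasure μ]

lemma deriv2 (p q : Fin N) (hpq : p ≠ q) (a b c d : Fin N) :
    ∫ U, (dl p q (VM U) a b * star (VM U c d) + VM U a b * star (dl p q (VM U) c d)) ∂μ = 0 := by
  have h := coe_deriv_zero μ
    (fun t U => vt p q t U a b * star (vt p q t U c d))
    (fun t U => vt' p q t U a b * star (vt p q t U c d) + vt p q t U a b * star (vt' p q t U c d))
    (fun t => by
      have h1 := (vt_cont p q a b).comp (Continuous.prodMk_right t)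
      have h2 := (vt_cont p q c d).comp (Continuous.prodMk_right t)
      exact h1.mul h2.star)
    (by
      have h1 := vt_cont p q a b
      have h2 := vt_cont p q c d
      have h3 := vt'_cont p q a b
      have h4 := vt'_cont p q c d
      fun_prop)
    (fun t U => (vt_deriv p q t U a b).mul (vt_deriv p q t U c d).star)
    (∫ U, VM U a b * star (VM U c d) ∂μ)
    (fun t => VM_inv μ (fun V => V a b * star (V c d)) ⟨rot p q t, rot_unit p q hpq t⟩)
  simpa only [vt_zero, vt'_zero p q hpq] using h

lemma deriv4 (p q : Fin N) (hpq : p ≠ q) (a b c d e f g h : Fin N) :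
    ∫ U, ((dl p q (VM U) a b * VM U c d + VM U a b * dl p q (VM U) c d) *
        star (VM U e f * VM U g h) +
      VM U a b * VM U c d *
        star (dl p q (VM U) e f * VM U g h + VM U e f * dl p q (VM U) g h)) ∂μ = 0 := by
  have h := coe_deriv_zero μ
    (fun t U => vt p q t U a b * vt p q t U c d * star (vt p q t U e f * vt p q t U g h))
    (fun t U => (vt' p q t U a b * vt p q t U c d + vt p q t U a b * vt' p q t U c d) *
        star (vt p q t U e f * vt p q t U g h) +
      vt p q t U a b * vt p q t U c d *
        star (vt' p q t U e f * vt p q t U g h + vt p q t U e f * vt' p q t U g h))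
    (fun t => by
      have h1 := (vt_cont p q a b).comp (Continuous.prodMk_right t)
      have h2 := (vt_cont p q c d).comp (Continuous.prodMk_right t)
      have h3 := (vt_cont p q e f).comp (Continuous.prodMk_right t)
      have h4 := (vt_cont p q g h).comp (Continuous.prodMk_right t)
      exact (h1.mul h2).mul (h3.mul h4).star)
    (by
      have h1 := vt_cont p q a b
      have h2 := vt_cont p q c d
      have h3 := vt'_cont p q a b
      have h4 := vt'_cont p q c d
      have h5 := vt_cont p q e f
      have h6 := vt_cont p q g h
      have h7 := vt'_cont p q e f
      have h8 := vt'_cont p q g h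
      fun_prop)
    (fun t U => ((vt_deriv p q t U a b).mul (vt_deriv p q t U c d)).mul
      ((vt_deriv p q t U e f).mul (vt_deriv p q t U g h)).star)
    (∫ U, VM U a b * VM U c d * star (VM U e f * VM U g h) ∂μ)
    (fun t => VM_inv μ (fun V => V a b * V c d * star (V e f * V g h))
      ⟨rot p q t, rot_unit p q hpq t⟩)
  simpa only [vt_zero, vt'_zero p q hpq] using h

/-- phase factor. -/
def ph (r a : Fin N) : ℂ := if a = r then Complex.I else 1

lemma phase (F : Matrix (Fin N) (Fin N) ℂ → ℂ) (r : Fin N)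
    (hF : ∀ V : Matrix (Fin N) (Fin N) ℂ, F (fun a b => ph r a * V a b * ph r b) = - F V) :
    ∫ U, F (VM U) ∂μ = 0 := by
  have hW : Matrix.diagonal (ph r) ∈ Matrix.unitaryGroup (Fin N) ℂ := by
    rw [Matrix.mem_unitaryGroup_iff, Matrix.star_eq_conjTranspose, Matrix.diagonal_conjTranspose,
      Matrix.diagonal_mul_diagonal, ← Matrix.diagonal_one]
    congr 1
    ext a
    simp only [ph, Pi.star_apply]
    split_ifs <;> simp
  have h := VM_inv μ F ⟨_, hW⟩
  have h2 : ∀ V : Matrix (Fin N) (Fin N) ℂ,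
      (Matrix.diagonal (ph r))ᵀ * V * Matrix.diagonal (ph r) =
        fun a b => ph r a * V a b * ph r b := by
    intro V; ext a b
    simp [Matrix.mul_diagonal, Matrix.diagonal_mul]
  simp only [h2, hF, integral_neg] at h
  exact self_eq_neg.1 h.symm

lemma rel1 (i j : Fin N) (hij : i ≠ j) :
    2 * ∫ U, VM U i j * star (VM U i j) ∂μ = ∫ U, VM U i i * star (VM U i i) ∂μ := by
  have z : ∫ U, VM U i i * star (VM U j j) ∂μ = 0 := by
    refine phase μ (fun V => V i i * star (V j j)) i fun V => ?_
    simp only [ph, hij.symm, if_true, if_false, star_mul', star_one]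
    linear_combination (V i i * star (V j j)) * Complex.I_mul_I
  have h := deriv2 μ i j hij i i i j
  have e : ∀ U, (dl i j (VM U) i i * star (VM U i j) + VM U i i * star (dl i j (VM U) i j)) =
      2 * (VM U i j * star (VM U i j)) - VM U i i * star (VM U i i)
        + VM U i i * star (VM U j j) := by
    intro U
    simp only [dl, hij.symm, if_true, if_false, VM_symm U j i, star_add, star_neg]
    ring
  simp only [e] at h
  rw [integral_add (cont_int μ (by fun_prop)) (cont_int μ (by fun_prop)),
    integral_sub (cont_int μ (by fun_prop)) (cont_int μ (by fun_prop)),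
    integral_const_mul, z] at h
  linear_combination h

lemma rel2 (i j : Fin N) (hij : i ≠ j) :
    4 * ∫ U, VM U i i * VM U i j * star (VM U i i * VM U i j) ∂μ =
      ∫ U, VM U i i * VM U i i * star (VM U i i * VM U i i) ∂μ := by
  have z1 : ∫ U, VM U i i * VM U i i * star (VM U i i * VM U j j) ∂μ = 0 := by
    refine phase μ (fun V => V i i * V i i * star (V i i * V j j)) i fun V => ?_
    simp only [ph, hij.symm, if_true, if_false, star_mul', star_one]
    simp only [Complex.star_def, Complex.conj_I]
    ring_nf
    simp [Complex.I_sq, Complex.I_pow_four, show Complex.I ^ 6 = -1 by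
      rw [show 6 = 2 * 3 by rfl, pow_mul, Complex.I_sq]; norm_num]
  have z2 : ∫ U, VM U i i * VM U i i * star (VM U i j * VM U i j) ∂μ = 0 := by
    refine phase μ (fun V => V i i * V i i * star (V i j * V i j)) i fun V => ?_
    simp only [ph, hij.symm, if_true, if_false, star_mul', star_one]
    simp only [Complex.star_def, Complex.conj_I]
    ring_nf
    simp [Complex.I_sq, Complex.I_pow_four, show Complex.I ^ 6 = -1 by
      rw [show 6 = 2 * 3 by rfl, pow_mul, Complex.I_sq]; norm_num]
  have h := deriv4 μ i j hij i i i i i i i j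
  have e : ∀ U, ((dl i j (VM U) i i * VM U i i + VM U i i * dl i j (VM U) i i) *
        star (VM U i i * VM U i j) +
      VM U i i * VM U i i *
        star (dl i j (VM U) i i * VM U i j + VM U i i * dl i j (VM U) i j)) =
      4 * (VM U i i * VM U i j * star (VM U i i * VM U i j))
        - VM U i i * VM U i i * star (VM U i i * VM U i i)
        + VM U i i * VM U i i * star (VM U i i * VM U j j)
        + 2 * (VM U i i * VM U i i * star (VM U i j * VM U i j)) := by
    intro U
    simp only [dl, hij.symm, if_true, if_false, VM_symm U j i, star_add, star_neg, star_mul']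
    ring
  simp only [e] at h
  rw [integral_add (cont_int μ (by fun_prop)) (cont_int μ (by fun_prop)),
    integral_add (cont_int μ (by fun_prop)) (cont_int μ (by fun_prop)),
    integral_sub (cont_int μ (by fun_prop)) (cont_int μ (by fun_prop)),
    integral_const_mul, integral_const_mul, z1, z2] at h
  linear_combination h

lemma rel3 (i j k : Fin N) (hij : i ≠ j) (hik : i ≠ k) (hjk : j ≠ k) :
    2 * ∫ U, VM U i j * VM U i k * star (VM U i i * VM U j k) ∂μ =
      ∫ U, VM U i j * VM U i j * star (VM U i i * VM U j j) ∂μ := by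
  have z1 : ∫ U, VM U i j * VM U i j * star (VM U i i * VM U k k) ∂μ = 0 := by
    refine phase μ (fun V => V i j * V i j * star (V i i * V k k)) k fun V => ?_
    simp only [ph, hik, hjk, if_true, if_false, star_mul', star_one]
    simp only [Complex.star_def, Complex.conj_I]
    ring_nf
    simp [Complex.I_sq]
  have h := deriv4 μ j k hjk i j i j i i j k
  have e : ∀ U, ((dl j k (VM U) i j * VM U i j + VM U i j * dl j k (VM U) i j) *
        star (VM U i i * VM U j k) +
      VM U i j * VM U i j *
        star (dl j k (VM U) i i * VM U j k + VM U i i * dl j k (VM U) j k)) =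
      2 * (VM U i j * VM U i k * star (VM U i i * VM U j k))
        - VM U i j * VM U i j * star (VM U i i * VM U j j)
        + VM U i j * VM U i j * star (VM U i i * VM U k k) := by
    intro U
    simp only [dl, hij, hik, hjk.symm, if_true, if_false, star_add, star_neg, star_mul', star_zero]
    ring
  simp only [e] at h
  rw [integral_add (cont_int μ (by fun_prop)) (cont_int μ (by fun_prop)),
    integral_sub (cont_int μ (by fun_prop)) (cont_int μ (by fun_prop)),
    integral_const_mul, z1] at h
  linear_combination h

lemma sum_one (i : Fin N) (f : Fin N → ℂ) (c d : ℂ) (hi : f i = c) (h : ∀ k, k ≠ i → f k = d) :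
    ∑ k, f k = c + ((N : ℂ) - 1) * d := by
  have hN : 1 ≤ N := Nat.one_le_of_lt i.2
  rw [← Finset.add_sum_erase _ _ (Finset.mem_univ i), hi,
    Finset.sum_congr rfl (fun k hk => h k (Finset.ne_of_mem_erase hk))]
  simp [Finset.card_erase_of_mem, Nat.cast_sub hN]

lemma first_moment (i : Fin N) :
    ((N : ℂ) + 1) * ∫ U, VM U i i * star (VM U i i) ∂μ = 2 := by
  have h : ∑ k, ∫ U, VM U i k * star (VM U i k) ∂μ = 1 := by
    rw [← integral_finsetSum _ (fun k _ => cont_int μ (by fun_prop))]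
    simp only [VM_row]
    simp
  rw [sum_one i _ _ ((∫ U, VM U i i * star (VM U i i) ∂μ) / 2) rfl
    (fun k hk => by rw [← rel1 μ i k hk.symm]; ring)] at h
  linear_combination 2 * h

lemma second_moment (i : Fin N) :
    ((N : ℂ) + 3) * ∫ U, VM U i i * VM U i i * star (VM U i i * VM U i i) ∂μ =
      4 * ∫ U, VM U i i * star (VM U i i) ∂μ := by
  have h : ∑ k, ∫ U, VM U i i * VM U i k * star (VM U i i * VM U i k) ∂μ =
      ∫ U, VM U i i * star (VM U i i) ∂μ := by
    rw [← integral_finsetSum _ (fun k _ => cont_int μ (by fun_prop))]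
    congr 1
    ext U
    have := VM_row U i i
    rw [if_pos rfl] at this
    calc _ = VM U i i * star (VM U i i) * ∑ k, VM U i k * star (VM U i k) := by
          rw [Finset.mul_sum]
          exact Finset.sum_congr rfl fun k _ => by rw [star_mul']; ring
      _ = _ := by rw [this, mul_one]
  rw [sum_one i _ _ ((∫ U, VM U i i * VM U i i * star (VM U i i * VM U i i) ∂μ) / 4) rfl
    (fun k hk => by rw [← rel2 μ i k hk.symm]; ring)] at h
  linear_combination 4 * h

lemma cross (i j : Fin N) (hij : i ≠ j) :
    (N : ℂ) * ∫ U, VM U i j * VM U i j * star (VM U i i * VM U j j) ∂μ =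
      - 2 * ∫ U, VM U i i * VM U i j * star (VM U i i * VM U i j) ∂μ := by
  have h : ∑ k, ∫ U, VM U i j * VM U i k * star (VM U i i * VM U j k) ∂μ = 0 := by
    rw [← integral_finsetSum _ (fun k _ => cont_int μ (by fun_prop))]
    have : ∀ U, ∑ k, VM U i j * VM U i k * star (VM U i i * VM U j k) = 0 := by
      intro U
      have := VM_row U i j
      rw [if_neg hij] at this
      calc _ = VM U i j * star (VM U i i) * ∑ k, VM U i k * star (VM U j k) := by
            rw [Finset.mul_sum]
            exact Finset.sum_congr rfl fun k _ => by rw [star_mul']; ring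
        _ = _ := by rw [this, mul_zero]
    simp only [this, integral_zero]
  have e1 : ∫ U, VM U i j * VM U i i * star (VM U i i * VM U j i) ∂μ =
      ∫ U, VM U i i * VM U i j * star (VM U i i * VM U i j) ∂μ := by
    congr 1; ext U; rw [VM_symm U j i]; ring
  set E := ∫ U, VM U i j * VM U i j * star (VM U i i * VM U j j) ∂μ with hE
  have h2 : ∑ k, ((∫ U, VM U i j * VM U i k * star (VM U i i * VM U j k) ∂μ)
      - if k = j then E / 2 else 0) =
      (∫ U, VM U i i * VM U i j * star (VM U i i * VM U i j) ∂μ) + ((N : ℂ) - 1) * (E / 2) := by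
    refine sum_one i _ _ _ ?_ ?_
    · rw [if_neg hij, e1, sub_zero]
    · intro k hk
      by_cases hkj : k = j
      · subst hkj
        rw [if_pos rfl, ← hE]; ring
      · rw [if_neg hkj, hE, ← rel3 μ i j k hij (Ne.symm hk) (Ne.symm hkj)]; ring
  rw [Finset.sum_sub_distrib, h, Finset.sum_ite_eq' Finset.univ j (fun _ => E / 2),
    if_pos (Finset.mem_univ j)] at h2
  linear_combination (-2) * h2

end moments

end COEproof

/-- `E[v_{ij}² conj(v_{ii} v_{jj})] = -4 / ((N+1) N (N+3))` for `i ≠ j`, `N ≥ 2`. -/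
theorem stmt16 (N : ℕ) (hN : 2 ≤ N) (i j : Fin N) (hij : i ≠ j)
    (μ : Measure (Matrix.unitaryGroup (Fin N) ℂ))
    [μ.IsHaarMeasure] [IsProbabilityMeasure μ] :
    ∫ U, (coeEntry U i j)^2 *
        (starRingEnd ℂ) (coeEntry U i i * coeEntry U j j) ∂μ =
      -4 / (((N : ℂ) + 1) * (N : ℂ) * ((N : ℂ) + 3)) := by
  have h1 := first_moment μ i
  have h2 := second_moment μ i
  have h3 := rel2 μ i j hij
  have h4 := cross μ i j hij
  have e : ∫ U, (coeEntry U i j)^2 *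
        (starRingEnd ℂ) (coeEntry U i i * coeEntry U j j) ∂μ =
      ∫ U, VM U i j * VM U i j * star (VM U i i * VM U j j) ∂μ := by
    congr 1; ext U; rw [sq]; rfl
  rw [e]
  have n0 : (N : ℂ) ≠ 0 := by exact_mod_cast (by omega : N ≠ 0)
  have n1 : (N : ℂ) + 1 ≠ 0 := by exact_mod_cast (by omega : N + 1 ≠ 0)
  have n3 : (N : ℂ) + 3 ≠ 0 := by exact_mod_cast (by omega : N + 3 ≠ 0)
  rw [eq_div_iff (by positivity)]
  linear_combination ((N : ℂ) + 1) * ((N : ℂ) + 3) * h4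
    - ((N : ℂ) + 1) * ((N : ℂ) + 3) / 2 * h3 - ((N : ℂ) + 1) / 2 * h2 - 2 * h1
end
end

section
/- Let $V^{(N)}$ be a sequence of COE matrices and fix $i \ne j$. Then the random variables $\sqrt{N}\, v_{ij}^{(N)}$ converge weakly as $N \to \infty$ to a standard complex Gaussian random variable, i.e., for all nonnegative integers $n, m$, $\lim_{N\to\infty} \mathbb{E}[(\sqrt{N} v_{ij}^{(N)})^n \overline{(\sqrt{N} v_{ij}^{(N)})^m}] = \delta_{nm}\, n!$. -/
open MeasureTheory Matrix

noncomputable section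

open Filter

abbrev UG (N : ℕ) := Matrix.unitaryGroup (Fin N) ℂ

lemma compactUG (N : ℕ) : CompactSpace (UG N) := by
  have hc : IsCompact (Set.pi Set.univ (fun _ : Fin N => Set.pi Set.univ
      (fun _ : Fin N => Metric.closedBall (0:ℂ) 1))) :=
    isCompact_univ_pi fun _ => isCompact_univ_pi fun _ => isCompact_closedBall _ _
  have hcl : IsClosed ((Matrix.unitaryGroup (Fin N) ℂ : Set (Matrix (Fin N) (Fin N) ℂ))) := by
    have : ((Matrix.unitaryGroup (Fin N) ℂ : Set (Matrix (Fin N) (Fin N) ℂ)))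
        = {A | A * star A = 1} := by
      ext A
      exact Matrix.mem_unitaryGroup_iff
    rw [this]
    exact isClosed_eq (by fun_prop) continuous_const
  have : IsCompact ((Matrix.unitaryGroup (Fin N) ℂ : Set (Matrix (Fin N) (Fin N) ℂ))) := by
    refine IsCompact.of_isClosed_subset hc hcl ?_
    intro A hA i _ j _
    exact mem_closedBall_zero_iff.mpr (entry_norm_bound_of_unitary hA i j)
  exact isCompact_iff_compactSpace.mp this

lemma right_inv {N : ℕ} (μ : Measure (UG N)) [μ.IsHaarMeasure] [IsProbabilityMeasure μ]
    (g : UG N) : μ.map (· * g) = μ := by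
  have := compactUG N
  have hm : Measurable (fun x : UG N => x * g) := (continuous_mul_const g).measurable
  have : IsProbabilityMeasure (μ.map (· * g)) :=
    Measure.isProbabilityMeasure_map hm.aemeasurable
  have : (μ.map (· * g)).IsHaarMeasure := Measure.isHaarMeasure_map_mul_right μ g
  exact Measure.isHaarMeasure_eq_of_isProbabilityMeasure _ _

lemma int_right {N : ℕ} (μ : Measure (UG N)) [μ.IsHaarMeasure] [IsProbabilityMeasure μ]
    (g : UG N) (F : UG N → ℂ) (hF : Continuous F) : ∫ x, F (x * g) ∂μ = ∫ x, F x ∂μ := by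
  have hm : Measurable (fun x : UG N => x * g) := (continuous_mul_const g).measurable
  conv_rhs => rw [← right_inv μ g]
  rw [integral_map hm.aemeasurable hF.aestronglyMeasurable]

lemma integrable_of_cont {N : ℕ} (μ : Measure (UG N)) [IsProbabilityMeasure μ]
    {E : Type*} [NormedAddCommGroup E] [SecondCountableTopology E] (F : UG N → E)
    (hF : Continuous F) : Integrable F μ := by
  have := compactUG N
  obtain ⟨C, hC⟩ := (isCompact_univ (X := UG N)).exists_bound_of_continuousOn hF.continuousOn
  exact Integrable.of_bound hF.aestronglyMeasurable C
    (Eventually.of_forall fun x => hC x (Set.mem_univ _))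

/-- infinitesimal invariance -/
lemma int_deriv {N : ℕ} (μ : Measure (UG N)) [μ.IsHaarMeasure] [IsProbabilityMeasure μ]
    (c : ℝ → UG N) (hc : ∀ s t, c (s + t) = c s * c t)
    (F F' : UG N → ℂ) (hF : Continuous F) (hF' : Continuous F')
    (hd : ∀ g, HasDerivAt (fun t => F (g * c t)) (F' g) 0) : ∫ x, F' x ∂μ = 0 := by
  have := compactUG N
  obtain ⟨C, hC⟩ := (isCompact_univ (X := UG N)).exists_bound_of_continuousOn hF'.continuousOn
  have hd' : ∀ g t, HasDerivAt (fun t => F (g * c t)) (F' (g * c t)) t := by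
    intro g t
    have h1 := hd (g * c t)
    have h2 : HasDerivAt (fun s => F (g * c t * c (s - t))) (F' (g * c t)) t := by
      have h3 : HasDerivAt (fun s : ℝ => s - t) 1 t := (hasDerivAt_id t).sub_const t
      have h4 := HasDerivAt.scomp (h := fun s : ℝ => s - t) (g₁ := fun t' => F (g * c t * c t')) t
        (by simpa using h1) h3
      simpa [Function.comp_def] using h4
    refine h2.congr_of_eventuallyEq (Eventually.of_forall fun s => ?_)
    simp only [mul_assoc, ← hc, add_sub_cancel]
  have hc0 : c 0 = 1 := by
    have := hc 0 0
    simpa using this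
  have key := hasDerivAt_integral_of_dominated_loc_of_deriv_le (μ := μ) (𝕜 := ℝ)
    (F := fun t g => F (g * c t)) (F' := fun t g => F' (g * c t)) (x₀ := (0:ℝ)) (s := Set.univ)
    (bound := fun _ => C) Filter.univ_mem
    (Eventually.of_forall fun t => (hF.comp (continuous_mul_const _)).aestronglyMeasurable)
    (integrable_of_cont μ _ (hF.comp (continuous_mul_const _)))
    (hF'.comp (continuous_mul_const _)).aestronglyMeasurable
    (Eventually.of_forall fun g t _ => hC _ (Set.mem_univ _)) (integrable_const _)
    (Eventually.of_forall fun g t _ => hd' g t)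
  have h1 := key.2
  simp only [hc0, mul_one] at h1
  have h2 : (fun t => ∫ g, F (g * c t) ∂μ) = fun _ => ∫ g, F g ∂μ := by
    funext t
    exact int_right μ (c t) F hF
  rw [h2] at h1
  exact h1.unique (hasDerivAt_const _ _)

/-- the COE matrix -/
def VV {N : ℕ} (U : UG N) : Matrix (Fin N) (Fin N) ℂ :=
  ((U : Matrix (Fin N) (Fin N) ℂ))ᵀ * (U : Matrix (Fin N) (Fin N) ℂ)

lemma VV_cont {N : ℕ} (i j : Fin N) : Continuous (fun U : UG N => VV U i j) := by
  have : Continuous (fun U : UG N => VV U) := by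
    unfold VV
    fun_prop
  exact this.matrix_elem i j

lemma VV_symm {N : ℕ} (U : UG N) (i j : Fin N) : VV U i j = VV U j i := by
  have : (VV U)ᵀ = VV U := by simp [VV]
  conv_lhs => rw [← this]
  rfl

lemma VV_unitary {N : ℕ} (U : UG N) (j : Fin N) : ∑ k, ‖VV U k j‖ ^ 2 = 1 := by
  have h0 : star (U : Matrix (Fin N) (Fin N) ℂ) * U = 1 := Matrix.mem_unitaryGroup_iff'.mp U.2
  have h0' : (U : Matrix (Fin N) (Fin N) ℂ) * star (U : Matrix (Fin N) (Fin N) ℂ) = 1 :=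
    Matrix.mem_unitaryGroup_iff.mp U.2
  have h1 : star (VV U) * VV U = 1 := by
    have h2 : (star (U : Matrix (Fin N) (Fin N) ℂ)ᵀ) * (U : Matrix (Fin N) (Fin N) ℂ)ᵀ = 1 := by
      have := congrArg Matrix.transpose h0'
      rw [Matrix.transpose_mul, Matrix.transpose_one] at this
      exact this
    unfold VV
    rw [star_mul, mul_assoc, ← mul_assoc _ _ (U : Matrix (Fin N) (Fin N) ℂ), h2, one_mul, h0]
  have h2 := congrFun (congrFun h1 j) j
  simp only [Matrix.mul_apply, Matrix.star_apply, Matrix.one_apply_eq] at h2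
  have h3 : ((∑ k, ‖VV U k j‖ ^ 2 : ℝ) : ℂ) = 1 := by
    rw [← h2]
    push_cast
    refine Finset.sum_congr rfl fun k _ => ?_
    rw [← Complex.conj_mul']
    rfl
  exact_mod_cast h3

section
open scoped Matrix.Norms.Operator

lemma exists_curve {N : ℕ} (X : Matrix (Fin N) (Fin N) ℂ) (hX : star X = -X) :
    ∃ c : ℝ → UG N, (∀ s t, c (s + t) = c s * c t) ∧
      ∀ i j, HasDerivAt (fun t => (c t : Matrix (Fin N) (Fin N) ℂ) i j) (X i j) 0 := by
  have hu : ∀ t : ℝ, NormedSpace.exp (t • X) ∈ Matrix.unitaryGroup (Fin N) ℂ := by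
    intro t
    have : star (t • X) = -(t • X) := by rw [star_smul, hX]; simp
    rw [Matrix.mem_unitaryGroup_iff, star_eq_conjTranspose, ← Matrix.exp_conjTranspose,
      ← star_eq_conjTranspose, this, ← Matrix.exp_add_of_commute]
    · simp
    · exact (Commute.refl _).neg_right
  refine ⟨fun t => ⟨_, hu t⟩, ?_, ?_⟩
  · intro s t
    apply Subtype.ext
    change NormedSpace.exp ((s + t) • X) = NormedSpace.exp (s • X) * NormedSpace.exp (t • X)
    rw [add_smul, Matrix.exp_add_of_commute]
    exact ((Commute.refl X).smul_left s).smul_right t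
  · intro i j
    have h := hasDerivAt_exp_smul_const (𝕂 := ℝ) X (0:ℝ)
    rw [zero_smul, NormedSpace.exp_zero, one_mul] at h
    let L : Matrix (Fin N) (Fin N) ℂ →L[ℝ] ℂ :=
      LinearMap.toContinuousLinearMap
        ((LinearMap.proj j : (Fin N → ℂ) →ₗ[ℝ] ℂ) ∘ₗ
          (LinearMap.proj i : (Fin N → Fin N → ℂ) →ₗ[ℝ] (Fin N → ℂ)))
    exact L.hasFDerivAt.comp_hasDerivAt (0:ℝ) h

end

/-- Derivative of `V` along a skew-Hermitian direction. -/
def DV {N : ℕ} (X : Matrix (Fin N) (Fin N) ℂ) (U : UG N) : Matrix (Fin N) (Fin N) ℂ :=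
  Xᵀ * VV U + VV U * X

lemma VV_deriv {N : ℕ} (X : Matrix (Fin N) (Fin N) ℂ) (c : ℝ → UG N)
    (hc : ∀ s t, c (s + t) = c s * c t)
    (hd : ∀ i j, HasDerivAt (fun t => (c t : Matrix (Fin N) (Fin N) ℂ) i j) (X i j) 0)
    (U : UG N) (i j : Fin N) :
    HasDerivAt (fun t => VV (U * c t) i j) (DV X U i j) 0 := by
  have hc0 : c 0 = 1 := by
    have := hc 0 0
    simpa using this
  have h1 : ∀ t, VV (U * c t) i j = ∑ l, (∑ k, (c t : Matrix (Fin N) (Fin N) ℂ) k i * VV U k l)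
      * (c t : Matrix (Fin N) (Fin N) ℂ) l j := by
    intro t
    have : VV (U * c t) = (c t : Matrix (Fin N) (Fin N) ℂ)ᵀ * VV U *
      (c t : Matrix (Fin N) (Fin N) ℂ) := by
      simp [VV, Matrix.transpose_mul, Matrix.mul_assoc]
    rw [this]
    simp [Matrix.mul_apply]
  rw [show (fun t => VV (U * c t) i j) = _ from funext h1]
  have h2 := HasDerivAt.fun_sum (u := (Finset.univ : Finset (Fin N))) (fun l _ =>
    (HasDerivAt.fun_sum (u := (Finset.univ : Finset (Fin N)))
      (fun k _ => (hd k i).mul_const (VV U k l))).mul (hd l j))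
  have he : DV X U i j = ∑ l, ((∑ k, X k i * VV U k l) * (c 0 : Matrix (Fin N) (Fin N) ℂ) l j
      + (∑ k, (c 0 : Matrix (Fin N) (Fin N) ℂ) k i * VV U k l) * X l j) := by
    simp [hc0, DV, Matrix.mul_apply, Matrix.one_apply, Finset.sum_add_distrib]
  rw [he]
  exact h2

lemma DV_cont {N : ℕ} (X : Matrix (Fin N) (Fin N) ℂ) (i j : Fin N) :
    Continuous (fun U : UG N => DV X U i j) := by
  have : Continuous (fun U : UG N => DV X U) := by
    unfold DV VV
    fun_prop
  exact this.matrix_elem i j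

/-- elementary skew-Hermitian matrix -/
def XX {N : ℕ} (a b : Fin N) (z : ℂ) : Matrix (Fin N) (Fin N) ℂ :=
  Matrix.single a b z - Matrix.single b a (star z)

lemma XX_skew {N : ℕ} (a b : Fin N) (z : ℂ) : star (XX a b z) = -XX a b z := by
  simp [XX, Matrix.star_eq_conjTranspose]

lemma DV_XX {N : ℕ} (a b : Fin N) (z : ℂ) (U : UG N) (k l : Fin N) :
    DV (XX a b z) U k l = ((if b = k then z * VV U a l else 0) - (if a = k then star z * VV U b l else 0))
     + ((if b = l then z * VV U k a else 0) - (if a = l then star z * VV U k b else 0)) := by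
  simp only [DV, XX, Matrix.add_apply, Matrix.mul_apply, Matrix.transpose_apply, Matrix.sub_apply,
    Matrix.single_apply, sub_mul, mul_sub, Finset.sum_sub_distrib, ite_mul, mul_ite, zero_mul,
    mul_zero]
  congr 2
  · by_cases h : b = k <;> simp [h]
  · by_cases h : a = k <;> simp [h]
  · by_cases h : b = l <;> simp [h, mul_comm]
  · by_cases h : a = l <;> simp [h, mul_comm]

lemma int_zero {N : ℕ} (μ : Measure (UG N)) [μ.IsHaarMeasure] [IsProbabilityMeasure μ]
    (X : Matrix (Fin N) (Fin N) ℂ) (hX : star X = -X)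
    (F F' : UG N → ℂ) (hF : Continuous F) (hF' : Continuous F')
    (hd : ∀ (U : UG N) (c : ℝ → UG N), c 0 = 1 →
      (∀ i j, HasDerivAt (fun t => VV (U * c t) i j) (DV X U i j) 0) →
      HasDerivAt (fun t => F (U * c t)) (F' U) 0) : ∫ x, F' x ∂μ = 0 := by
  obtain ⟨c, hc, hd'⟩ := exists_curve X hX
  have hc0 : c 0 = 1 := by
    have := hc 0 0
    simpa using this
  exact int_deriv μ c hc F F' hF hF' fun U => hd U c hc0 fun i j => VV_deriv X c hc hd' U i j

/-- combine directions `z = 1` and `z = I` -/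
lemma combine {A B : ℂ} (h : ∀ z : ℂ, z * A - star z * B = 0) : A = 0 := by
  have h1 := h 1
  have h2 := h Complex.I
  simp at h1 h2
  have h3 : A + B = 0 := by
    have : Complex.I * (A + B) = 0 := by linear_combination h2
    simpa using this
  linear_combination (h1 + h3) / 2

lemma lemA {N : ℕ} (μ : Measure (UG N)) [μ.IsHaarMeasure] [IsProbabilityMeasure μ]
    (i j k : Fin N) (hij : i ≠ j) (hki : k ≠ i) (hkj : k ≠ j) (a : ℕ) :
    ∫ U, ‖VV U i j‖ ^ (2 * (a + 1)) ∂μ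
      = (a + 1) * ∫ U, ‖VV U k j‖ ^ 2 * ‖VV U i j‖ ^ (2 * a) ∂μ := by
  have cq := VV_cont i j
  have cp := VV_cont k j
  have main : ∫ U, (VV U i j ^ (a+1) * star (VV U i j) ^ (a+1)
      - (a+1) * (VV U k j * star (VV U k j) * (VV U i j ^ a * star (VV U i j) ^ a))) ∂μ = 0 := by
    refine combine (B := ∫ U, (a * VV U k j ^ 2 * VV U i j ^ (a-1) * star (VV U i j) ^ (a+1)) ∂μ) ?_
    intro z
    rw [← integral_const_mul, ← integral_const_mul, ← integral_sub]
    · refine int_zero μ (XX i k z) (XX_skew _ _ _)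
        (fun U => VV U k j * VV U i j ^ a * star (VV U i j) ^ (a+1)) _ (by fun_prop)
          (by fun_prop) ?_
      intro U c hc0 hd
      have h := ((hd k j).mul ((hd i j).pow a)).mul ((hd i j).star.pow (a+1))
      have e1 : DV (XX i k z) U k j = z * VV U i j := by
        rw [DV_XX]; simp [hij, hki.symm, hkj]
      have e2 : DV (XX i k z) U i j = - (star z * VV U k j) := by
        rw [DV_XX]; simp [hij, hki, hkj]
      rw [e1, e2] at h
      refine h.congr_deriv ?_
      simp only [hc0, mul_one, Pi.mul_apply, Pi.pow_apply, Nat.add_sub_cancel, star_neg, star_mul,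
        star_star]
      push_cast
      ring
    · exact integrable_of_cont μ _ (by fun_prop)
    · exact integrable_of_cont μ _ (by fun_prop)
  have h2 : ∫ U, ((‖VV U i j‖ ^ (2 * (a + 1))
      - (a + 1) * (‖VV U k j‖ ^ 2 * ‖VV U i j‖ ^ (2 * a)) : ℝ) : ℂ) ∂μ = 0 := by
    rw [← main]
    congr 1
    funext U
    push_cast
    rw [← mul_pow, ← mul_pow, pow_mul, pow_mul]
    have e : ∀ w : ℂ, w * star w = (‖w‖ : ℂ) ^ 2 := fun w => Complex.mul_conj' w
    rw [e, e]
  rw [integral_complex_ofReal] at h2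
  have h3 : ∫ U, (‖VV U i j‖ ^ (2 * (a + 1))
      - (a + 1) * (‖VV U k j‖ ^ 2 * ‖VV U i j‖ ^ (2 * a))) ∂μ = 0 := by exact_mod_cast h2
  rw [integral_sub, integral_const_mul] at h3
  · linarith
  · exact integrable_of_cont μ _ (by fun_prop)
  · exact integrable_of_cont μ _ (by fun_prop)

lemma lemB {N : ℕ} (μ : Measure (UG N)) [μ.IsHaarMeasure] [IsProbabilityMeasure μ]
    (j k : Fin N) (hkj : k ≠ j) :
    ∫ U, ‖VV U j j‖ ^ 2 ∂μ = 2 * ∫ U, ‖VV U k j‖ ^ 2 ∂μ := by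
  have cq := VV_cont j j
  have cp := VV_cont k j
  have cr := VV_cont k k
  have main : ∫ U, (VV U j j * star (VV U j j) - 2 * (VV U k j * star (VV U k j))) ∂μ = 0 := by
    refine combine (B := ∫ U, (VV U k k * star (VV U j j)) ∂μ) ?_
    intro z
    rw [← integral_const_mul, ← integral_const_mul, ← integral_sub]
    · refine int_zero μ (XX j k z) (XX_skew _ _ _)
        (fun U => VV U k j * star (VV U j j)) _ (by fun_prop) (by fun_prop) ?_
      intro U c hc0 hd
      have h := (hd k j).mul (hd j j).star
      have e1 : DV (XX j k z) U k j = z * VV U j j - star z * VV U k k := by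
        rw [DV_XX]; simp [hkj, hkj.symm]; ring
      have e2 : DV (XX j k z) U j j = - (2 * star z * VV U k j) := by
        rw [DV_XX, VV_symm U j k]; simp [hkj]; ring
      rw [e1, e2] at h
      refine h.congr_deriv ?_
      simp only [hc0, mul_one, star_neg, star_mul, star_star, star_ofNat]
      ring
    · exact integrable_of_cont μ _ (by fun_prop)
    · exact integrable_of_cont μ _ (by fun_prop)
  have h2 : ∫ U, ((‖VV U j j‖ ^ 2 - 2 * ‖VV U k j‖ ^ 2 : ℝ) : ℂ) ∂μ = 0 := by
    rw [← main]
    congr 1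
    funext U
    push_cast
    have e : ∀ w : ℂ, w * star w = (‖w‖ : ℂ) ^ 2 := fun w => Complex.mul_conj' w
    rw [e, e]
  rw [integral_complex_ofReal] at h2
  have h3 : ∫ U, (‖VV U j j‖ ^ 2 - 2 * ‖VV U k j‖ ^ 2) ∂μ = 0 := by exact_mod_cast h2
  rw [integral_sub, integral_const_mul] at h3
  · linarith
  · exact integrable_of_cont μ _ (by fun_prop)
  · exact integrable_of_cont μ _ (by fun_prop)

lemma lemC {N : ℕ} (μ : Measure (UG N)) [μ.IsHaarMeasure] [IsProbabilityMeasure μ]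
    (i j : Fin N) (n m : ℕ) (hnm : n ≠ m) :
    ∫ U, VV U i j ^ n * star (VV U i j) ^ m ∂μ = 0 := by
  have cq := VV_cont i j
  have main : ∫ U, (2 * Complex.I * ((n:ℂ) - m)) * (VV U i j ^ n * star (VV U i j) ^ m) ∂μ = 0 := by
    refine int_zero μ (Complex.I • 1) (by simp [star_smul])
        (fun U => VV U i j ^ n * star (VV U i j) ^ m) _ (by fun_prop) (by fun_prop) ?_
    intro U c hc0 hd
    have h := ((hd i j).pow n).mul ((hd i j).star.pow m)
    have e1 : DV (Complex.I • 1) U i j = 2 * Complex.I * VV U i j := by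
      simp [DV]; ring
    rw [e1] at h
    refine h.congr_deriv ?_
    simp only [hc0, mul_one, Pi.pow_apply, star_mul, star_ofNat]
    have hI : star Complex.I = - Complex.I := Complex.conj_I
    rw [hI]
    rcases n with _ | n <;> rcases m with _ | m <;> simp <;> ring
  rw [integral_const_mul] at main
  rcases mul_eq_zero.mp main with h | h
  · exfalso
    have : (n:ℂ) - m ≠ 0 := sub_ne_zero.mpr (by exact_mod_cast hnm)
    simp [this] at h
  · exact h

lemma rec_e {N : ℕ} (μ : Measure (UG N)) [μ.IsHaarMeasure] [IsProbabilityMeasure μ]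
    (i j : Fin N) (hij : i ≠ j) (a : ℕ) :
    ((N:ℝ) - 1 + a) * ∫ U, ‖VV U i j‖ ^ (2 * (a + 1)) ∂μ
      = (a + 1) * (∫ U, ‖VV U i j‖ ^ (2 * a) ∂μ
        - ∫ U, ‖VV U j j‖ ^ 2 * ‖VV U i j‖ ^ (2 * a) ∂μ) := by
  have hc := fun k l : Fin N => VV_cont k l
  have hI : ∀ k, Integrable (fun U => ‖VV U k j‖ ^ 2 * ‖VV U i j‖ ^ (2 * a)) μ := fun k =>
    integrable_of_cont μ _ (((hc k j).norm.pow 2).mul ((hc i j).norm.pow _))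
  have h1 : ∑ k, ∫ U, ‖VV U k j‖ ^ 2 * ‖VV U i j‖ ^ (2 * a) ∂μ
      = ∫ U, ‖VV U i j‖ ^ (2 * a) ∂μ := by
    rw [← integral_finsetSum _ fun k _ => hI k]
    congr 1
    funext U
    rw [← Finset.sum_mul, VV_unitary, one_mul]
  rw [← Finset.add_sum_erase _ _ (Finset.mem_univ j),
    ← Finset.add_sum_erase _ _ (Finset.mem_erase.mpr ⟨hij, Finset.mem_univ i⟩)] at h1
  have h2 : ((a:ℝ) + 1) * ∑ k ∈ (Finset.univ.erase j).erase i,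
      ∫ U, ‖VV U k j‖ ^ 2 * ‖VV U i j‖ ^ (2 * a) ∂μ
      = ((N:ℝ) - 2) * ∫ U, ‖VV U i j‖ ^ (2 * (a + 1)) ∂μ := by
    rw [Finset.mul_sum]
    rw [Finset.sum_congr rfl (g := fun _ => ∫ U, ‖VV U i j‖ ^ (2 * (a + 1)) ∂μ)]
    · rw [Finset.sum_const, Finset.card_erase_of_mem (Finset.mem_erase.mpr ⟨hij, Finset.mem_univ i⟩),
        Finset.card_erase_of_mem (Finset.mem_univ j), Finset.card_univ, Fintype.card_fin,
        nsmul_eq_mul]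
      have : 2 ≤ N := by
        have := i.2
        have := j.2
        have : (i:ℕ) ≠ j := fun h => hij (Fin.ext h)
        omega
      congr 1
      rw [Nat.sub_sub, Nat.cast_sub this]
      norm_num
    · intro k hk
      simp only [Finset.mem_erase] at hk
      exact (lemA μ i j k hij hk.1 hk.2.1 a).symm
  have h3 : ∫ U, ‖VV U i j‖ ^ 2 * ‖VV U i j‖ ^ (2 * a) ∂μ
      = ∫ U, ‖VV U i j‖ ^ (2 * (a + 1)) ∂μ := by
    congr 1
    funext U
    ring
  rw [h3] at h1
  rw [← h1]
  linear_combination -h2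

lemma diag_e {N : ℕ} (μ : Measure (UG N)) [μ.IsHaarMeasure] [IsProbabilityMeasure μ]
    (j : Fin N) : ((N:ℝ) + 1) * ∫ U, ‖VV U j j‖ ^ 2 ∂μ = 2 := by
  have hI : ∀ k, Integrable (fun U => ‖VV U k j‖ ^ 2) μ := fun k =>
    integrable_of_cont μ _ ((VV_cont k j).norm.pow 2)
  have h1 : ∑ k, ∫ U, ‖VV U k j‖ ^ 2 ∂μ = 1 := by
    rw [← integral_finsetSum _ fun k _ => hI k]
    simp [VV_unitary]
  rw [← Finset.add_sum_erase _ _ (Finset.mem_univ j)] at h1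
  have h2 : 2 * ∑ k ∈ Finset.univ.erase j, ∫ U, ‖VV U k j‖ ^ 2 ∂μ
      = ((N:ℝ) - 1) * ∫ U, ‖VV U j j‖ ^ 2 ∂μ := by
    rw [Finset.mul_sum]
    rw [Finset.sum_congr rfl (g := fun _ => ∫ U, ‖VV U j j‖ ^ 2 ∂μ)]
    · rw [Finset.sum_const, Finset.card_erase_of_mem (Finset.mem_univ j), Finset.card_univ,
        Fintype.card_fin, nsmul_eq_mul]
      have : 1 ≤ N := by
        have := j.2
        omega
      congr 1
      rw [Nat.cast_sub this]
      norm_num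
    · intro k hk
      simp only [Finset.mem_erase] at hk
      exact (lemB μ j k hk.1).symm
  linear_combination 2 * h1 - h2

lemma bound_e {N : ℕ} (μ : Measure (UG N)) [μ.IsHaarMeasure] [IsProbabilityMeasure μ]
    (i j : Fin N) (hij : i ≠ j) (hN : 2 ≤ N) (a : ℕ) :
    (N:ℝ) ^ a * ∫ U, ‖VV U i j‖ ^ (2 * a) ∂μ ≤ 2 ^ a * a.factorial := by
  have hN' : (2:ℝ) ≤ N := by exact_mod_cast hN
  induction a with
  | zero => simp
  | succ a ih =>
    have h := rec_e μ i j hij a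
    have hr : 0 ≤ ∫ U, ‖VV U j j‖ ^ 2 * ‖VV U i j‖ ^ (2 * a) ∂μ :=
      integral_nonneg fun U => by positivity
    have he : 0 ≤ ∫ U, ‖VV U i j‖ ^ (2 * (a + 1)) ∂μ := integral_nonneg fun U => by positivity
    set e' := ∫ U, ‖VV U i j‖ ^ (2 * (a + 1)) ∂μ
    set e := ∫ U, ‖VV U i j‖ ^ (2 * a) ∂μ
    set r := ∫ U, ‖VV U j j‖ ^ 2 * ‖VV U i j‖ ^ (2 * a) ∂μ
    have ha : (0:ℝ) ≤ a := Nat.cast_nonneg a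
    have h1 : (N:ℝ) * e' ≤ 2 * ((a + 1) * e) := by
      have : (N:ℝ) * e' ≤ 2 * (((N:ℝ) - 1 + a) * e') := by nlinarith
      rw [h] at this
      nlinarith
    calc (N:ℝ) ^ (a+1) * e' = (N:ℝ) ^ a * (N * e') := by ring
      _ ≤ (N:ℝ) ^ a * (2 * ((a + 1) * e)) := by gcongr
      _ = 2 * (a + 1) * ((N:ℝ) ^ a * e) := by ring
      _ ≤ 2 * (a + 1) * (2 ^ a * a.factorial) := by gcongr
      _ = _ := by rw [Nat.factorial_succ]; push_cast; ring

lemma VV_le_one {N : ℕ} (U : UG N) (i j : Fin N) : ‖VV U i j‖ ≤ 1 := by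
  have h := VV_unitary U j
  have h2 := Finset.single_le_sum (f := fun k => ‖VV U k j‖ ^ 2) (fun k _ => by positivity)
    (Finset.mem_univ i)
  simp only [h] at h2
  exact (sq_le_one_iff₀ (norm_nonneg _)).mp h2

lemma bound_r {N : ℕ} (μ : Measure (UG N)) [μ.IsHaarMeasure] [IsProbabilityMeasure μ]
    (i j : Fin N) (hij : i ≠ j) (hN : 2 ≤ N) (a : ℕ) :
    (N:ℝ) ^ a * ∫ U, ‖VV U j j‖ ^ 2 * ‖VV U i j‖ ^ (2 * a) ∂μ
      ≤ (2 + 2 ^ (2 * a) * (2 * a).factorial) / √N := by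
  have hN' : (2:ℝ) ≤ N := by exact_mod_cast hN
  have hs : 0 < √(N:ℝ) := Real.sqrt_pos.mpr (by linarith)
  have hss : √(N:ℝ) * √(N:ℝ) = N := Real.mul_self_sqrt (by linarith)
  have hd := diag_e μ j
  have hb := bound_e μ i j hij hN (2 * a)
  have cj := VV_cont j j
  have ci := VV_cont i j
  have h1 : (N:ℝ) ^ a * ∫ U, ‖VV U j j‖ ^ 2 * ‖VV U i j‖ ^ (2 * a) ∂μ
      ≤ ∫ U, (√N * ‖VV U j j‖ ^ 2 + (1 / √N) * ((N:ℝ) ^ (2 * a) * ‖VV U i j‖ ^ (2 * (2 * a)))) ∂μ := by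
    rw [← integral_const_mul]
    refine integral_mono (integrable_of_cont μ _ (by fun_prop)) (integrable_of_cont μ _ (by fun_prop)) ?_
    intro U
    simp only
    have hx := VV_le_one U j j
    have hx0 := norm_nonneg (VV U j j)
    set x := ‖VV U j j‖
    set y := (N:ℝ) ^ a * ‖VV U i j‖ ^ (2 * a) with hy
    have hy0 : 0 ≤ y := by positivity
    have e1 : (N:ℝ) ^ a * (x ^ 2 * ‖VV U i j‖ ^ (2 * a)) = x ^ 2 * y := by rw [hy]; ring
    have e2 : (N:ℝ) ^ (2 * a) * ‖VV U i j‖ ^ (2 * (2 * a)) = y ^ 2 := by rw [hy]; ring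
    rw [e1, e2]
    have h4 : x ^ 4 ≤ x ^ 2 := pow_le_pow_of_le_one hx0 hx (by norm_num)
    have e3 : √(N:ℝ) * x ^ 2 + 1 / √N * y ^ 2 - x ^ 2 * y
      = √(N:ℝ) * (x ^ 2 - x ^ 4) + (1 / √N) * ((√N * x ^ 2 - y / 2) ^ 2 + 3 / 4 * y ^ 2) := by
      field_simp
      ring
    have : 0 ≤ √(N:ℝ) * (x ^ 2 - x ^ 4) := mul_nonneg hs.le (by linarith)
    have : 0 ≤ (1 / √N) * ((√N * x ^ 2 - y / 2) ^ 2 + 3 / 4 * y ^ 2) := by positivity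
    linarith
  rw [integral_add (integrable_of_cont μ _ (by fun_prop)) (integrable_of_cont μ _ (by fun_prop)),
    integral_const_mul, integral_const_mul, integral_const_mul] at h1
  refine h1.trans ?_
  have hd0 : 0 ≤ ∫ U, ‖VV U j j‖ ^ 2 ∂μ := integral_nonneg fun U => by positivity
  rw [le_div_iff₀ hs]
  have e4 : (√(N:ℝ) * ∫ U, ‖VV U j j‖ ^ 2 ∂μ) * √N = N * ∫ U, ‖VV U j j‖ ^ 2 ∂μ := by
    linear_combination (∫ U, ‖VV U j j‖ ^ 2 ∂μ) * hss
  rw [add_mul, e4]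
  have e5 : ∀ w : ℝ, 1 / √(N:ℝ) * w * √N = w := fun w => by field_simp
  rw [e5]
  nlinarith

lemma lim_e (i j : ℕ) (hij : i ≠ j)
    (μ : (N : ℕ) → Measure (UG N))
    [∀ N, (μ N).IsHaarMeasure] [∀ N, IsProbabilityMeasure (μ N)] (a : ℕ) :
    Tendsto (fun N : ℕ => if h : i < N ∧ j < N then
      (N:ℝ) ^ a * ∫ U, ‖VV U ⟨i, h.1⟩ ⟨j, h.2⟩‖ ^ (2 * a) ∂(μ N) else 0) atTop
      (nhds (a.factorial : ℝ)) := by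
  induction a with
  | zero =>
    refine tendsto_const_nhds.congr' ?_
    filter_upwards [eventually_ge_atTop (i + j + 1)] with N hN
    rw [dif_pos ⟨by omega, by omega⟩]
    simp
  | succ a ih =>
    have hsq : Tendsto (fun N : ℕ => (2 + 2 ^ (2 * a) * ((2 * a).factorial : ℝ)) / √(N:ℝ)) atTop
        (nhds 0) :=
      Tendsto.const_div_atTop (Real.tendsto_sqrt_atTop.comp tendsto_natCast_atTop_atTop) _
    have hR : Tendsto (fun N : ℕ => if h : i < N ∧ j < N then
        (N:ℝ) ^ a * ∫ U, ‖VV U ⟨j, h.2⟩ ⟨j, h.2⟩‖ ^ 2 * ‖VV U ⟨i, h.1⟩ ⟨j, h.2⟩‖ ^ (2 * a) ∂(μ N)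
        else 0) atTop (nhds 0) := by
      refine squeeze_zero' ?_ ?_ hsq
      · refine Eventually.of_forall fun N => ?_
        split_ifs with h
        · exact mul_nonneg (by positivity) (integral_nonneg fun U => by positivity)
        · exact le_rfl
      · filter_upwards [eventually_ge_atTop (i + j + 1)] with N hN
        rw [dif_pos ⟨by omega, by omega⟩]
        exact bound_r (μ N) _ _ (by simpa [Fin.ext_iff] using hij) (by omega) a
    have hq : Tendsto (fun N : ℕ => (N:ℝ) / ((N:ℝ) + ((a:ℝ) - 1))) atTop (nhds 1) :=
      tendsto_natCast_div_add_atTop _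
    have h := (hq.mul_const ((a:ℝ) + 1)).mul (ih.sub hR)
    have e : (1 * ((a:ℝ) + 1)) * ((a.factorial : ℝ) - 0) = ((a+1).factorial : ℝ) := by
      rw [Nat.factorial_succ]; push_cast; ring
    rw [e] at h
    refine h.congr' ?_
    filter_upwards [eventually_ge_atTop (i + j + 1)] with N hN
    have hh : i < N ∧ j < N := ⟨by omega, by omega⟩
    rw [dif_pos hh, dif_pos hh, dif_pos hh]
    have hr := rec_e (μ N) ⟨i, hh.1⟩ ⟨j, hh.2⟩ (by simpa [Fin.ext_iff] using hij) a
    have hN2 : (2:ℝ) ≤ N := by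
      have : 2 ≤ N := by omega
      exact_mod_cast this
    have ha : (0:ℝ) ≤ a := Nat.cast_nonneg a
    have hne : (N:ℝ) + ((a:ℝ) - 1) ≠ 0 := by
      have : 0 < (N:ℝ) + ((a:ℝ) - 1) := by linarith
      exact this.ne'
    rw [← mul_sub, pow_succ, div_mul_eq_mul_div, div_mul_eq_mul_div, div_eq_iff hne]
    linear_combination -(N:ℝ) ^ a * N * hr
/-- For fixed `i ≠ j`, the off-diagonal entries `√N v_{ij}^{(N)}` of a sequence of COE
matrices converge weakly to a standard complex Gaussian: all mixed moments
`E[(√N v_{ij})^n conj(√N v_{ij})^m]` converge to `δ_{nm} n!`. -/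
theorem stmt19 (i j : ℕ) (hij : i ≠ j)
    (μ : (N : ℕ) → Measure (Matrix.unitaryGroup (Fin N) ℂ))
    [∀ N, (μ N).IsHaarMeasure] [∀ N, IsProbabilityMeasure (μ N)]
    (n m : ℕ) :
    Tendsto (fun N : ℕ =>
        if h : i < N ∧ j < N then
          ∫ U, ((Real.sqrt N : ℂ) * coeEntry U ⟨i, h.1⟩ ⟨j, h.2⟩)^n *
            (starRingEnd ℂ)
              (((Real.sqrt N : ℂ) * coeEntry U ⟨i, h.1⟩ ⟨j, h.2⟩)^m) ∂(μ N)
        else 0)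
      atTop (nhds (if n = m then (n.factorial : ℂ) else 0)) := by
  by_cases hnm : n = m
  · subst hnm
    rw [if_pos rfl]
    have h := lim_e i j hij μ n
    have h2 := (Complex.continuous_ofReal.tendsto _).comp h
    refine Tendsto.congr (fun N => ?_) (by simpa using h2)
    simp only [Function.comp]
    split_ifs with hh
    · push_cast
      rw [← integral_complex_ofReal, ← integral_const_mul]
      congr 1
      funext U
      change _ = ((√(N:ℝ) : ℂ) * VV U ⟨i, hh.1⟩ ⟨j, hh.2⟩) ^ n *
        (starRingEnd ℂ) (((√(N:ℝ) : ℂ) * VV U ⟨i, hh.1⟩ ⟨j, hh.2⟩) ^ n)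
      rw [Complex.mul_conj']
      have hs : ((√(N:ℝ) : ℝ) : ℂ) ^ 2 = N := by
        rw [← Complex.ofReal_pow, Real.sq_sqrt (Nat.cast_nonneg N)]
        simp
      rw [norm_pow, norm_mul, Complex.norm_real, Real.norm_of_nonneg (Real.sqrt_nonneg _), ← hs]
      push_cast
      ring
    · simp
  · rw [if_neg hnm]
    refine Tendsto.congr (fun N => ?_) tendsto_const_nhds
    split_ifs with hh
    · have h := lemC (μ N) ⟨i, hh.1⟩ ⟨j, hh.2⟩ n m hnm
      have h2 : ∀ U : UG N, ((Real.sqrt N : ℂ) * coeEntry U ⟨i, hh.1⟩ ⟨j, hh.2⟩)^n *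
            (starRingEnd ℂ) (((Real.sqrt N : ℂ) * coeEntry U ⟨i, hh.1⟩ ⟨j, hh.2⟩)^m)
          = ((Real.sqrt N : ℂ) ^ n * (Real.sqrt N : ℂ) ^ m) *
            (VV U ⟨i, hh.1⟩ ⟨j, hh.2⟩ ^ n * star (VV U ⟨i, hh.1⟩ ⟨j, hh.2⟩) ^ m) := by
        intro U
        change ((√(N:ℝ) : ℂ) * VV U ⟨i, hh.1⟩ ⟨j, hh.2⟩) ^ n *
          (starRingEnd ℂ) (((√(N:ℝ) : ℂ) * VV U ⟨i, hh.1⟩ ⟨j, hh.2⟩) ^ m) = _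
        rw [map_pow, map_mul, Complex.conj_ofReal, starRingEnd_apply]
        ring
      rw [integral_congr_ae (Eventually.of_forall h2), integral_const_mul, h, mul_zero]
    · rfl
end
end
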